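/- arXiv:2412.08256 — 10 statements merged into one kernel-verified Lean document; each statement's English description precedes it below -/
import Mathlib

section
/- Assume U is nonempty and G has a complete matching on U. Then the largest integer k with 0 ≤ k ≤ |V| such that G is k-CM on U equals min over nonempty U' ⊆ U of (|N_G(U')| − |U'|). -/
open Finset
open scoped Classical

/-- **Corollary 1.0.3**: if `U ≠ ∅` and `G` has a complete matching on `U`, then the
largest `k` with `0 ≤ k ≤ |V|` such that `G` is `k`-CM on `U` equals
`min_{∅ ≠ U' ⊆ U} (|N_G(U')| - |U'|)`. -/
theorem stmt_1 {U V : Type*} [Fintype U] [Fintype V]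
    (E : U → V → Prop)
    (hUV : Fintype.card U ≤ Fintype.card V)
    (hU : Nonempty U)
    (hmatch : ∃ f : U → V, Function.Injective f ∧ ∀ u : U, E u (f u)) :
    IsGreatest
      {k : ℕ | k ≤ Fintype.card V ∧
        ∀ V' : Finset V, V'.card + k = Fintype.card V →
          ∃ f : U → V, Function.Injective f ∧ ∀ u : U, E u (f u) ∧ f u ∈ V'}
      (sInf {n : ℕ | ∃ U' : Finset U, U'.Nonempty ∧
        n = (Finset.filter (fun v : V => ∃ u ∈ U', E u v) Finset.univ).card - U'.card}) := by
  have hall := (Fintype.all_card_le_filter_rel_iff_exists_injective E).2 hmatch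
  set S := {n : ℕ | ∃ U' : Finset U, U'.Nonempty ∧
        n = (Finset.filter (fun v : V => ∃ u ∈ U', E u v) Finset.univ).card - U'.card} with hS
  have hne : S.Nonempty := ⟨_, Finset.univ, Finset.univ_nonempty, rfl⟩
  have hle : ∀ U' : Finset U, U'.Nonempty → sInf S + U'.card ≤
      (Finset.filter (fun v : V => ∃ u ∈ U', E u v) Finset.univ).card := by
    intro U' h
    have h1 : sInf S ≤ _ := Nat.sInf_le ⟨U', h, rfl⟩
    have h2 : U'.card ≤ (Finset.filter (fun v : V => ∃ u ∈ U', E u v) Finset.univ).card := by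
      convert hall U'
    omega
  constructor
  · refine ⟨?_, ?_⟩
    · have h1 := hle Finset.univ Finset.univ_nonempty
      have h2 := Finset.card_le_univ
        (Finset.filter (fun v : V => ∃ u ∈ (Finset.univ : Finset U), E u v) Finset.univ)
      omega
    · intro V' hV'
      refine (Fintype.all_card_le_filter_rel_iff_exists_injective
        (fun u v => E u v ∧ v ∈ V')).1 ?_
      intro A
      rcases A.eq_empty_or_nonempty with rfl | hA
      · simp
      have h1 := hle A hA
      have h3 : (Finset.filter (fun v : V => ∃ u ∈ A, E u v) Finset.univ) ⊆
          (Finset.filter (fun v : V => ∃ u ∈ A, E u v ∧ v ∈ V') Finset.univ) ∪ V'ᶜ := by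
        intro v hv
        simp only [Finset.mem_filter, Finset.mem_union, Finset.mem_compl, Finset.mem_univ,
          true_and] at hv ⊢
        obtain ⟨u, hu, he⟩ := hv
        by_cases hvV : v ∈ V'
        · exact Or.inl ⟨u, hu, he, hvV⟩
        · exact Or.inr hvV
      have h4 := (Finset.card_le_card h3).trans (Finset.card_union_le _ _)
      rw [Finset.card_compl] at h4
      have h5 : A.card ≤
          (Finset.filter (fun v : V => ∃ u ∈ A, E u v ∧ v ∈ V') Finset.univ).card := by
        omega
      convert h5
  · rintro k ⟨hk, hcm⟩
    obtain ⟨U', hU', hn⟩ := Nat.sInf_mem hne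
    rw [hn]
    set N := Finset.filter (fun v : V => ∃ u ∈ U', E u v) Finset.univ with hN
    have key : ∀ R : Finset V, R.card = k → U'.card ≤ (N \ R).card := by
      intro R hR
      obtain ⟨f, hf, hE⟩ := hcm Rᶜ (by rw [Finset.card_compl]; omega)
      refine Finset.card_le_card_of_injOn f ?_ hf.injOn
      intro u hu
      have h := hE u
      have hu' : u ∈ U' := by simpa using hu
      have : f u ∈ N \ R := by
        rw [Finset.mem_sdiff]
        refine ⟨?_, by simpa using h.2⟩
        rw [hN, Finset.mem_filter]
        exact ⟨Finset.mem_univ _, u, hu', h.1⟩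
      simpa using this
    have hpos := hU'.card_pos
    rcases le_total k N.card with h | h
    · obtain ⟨R, hRN, hR⟩ := Finset.exists_subset_card_eq h
      have := key R hR
      rw [Finset.card_sdiff_of_subset hRN] at this
      omega
    · obtain ⟨R, hRN, -, hR⟩ := Finset.exists_subsuperset_card_eq (Finset.subset_univ N) h
        (by simpa using hk)
      have := key R hR
      rw [Finset.sdiff_eq_empty_iff_subset.2 hRN] at this
      simp at this
      simp [this] at hpos
end

section
/- If every s–t path of D of length at most d has at least two internal vertices, then the polytope P(D, d) is full-dimensional, i.e., its affine span is all of ℝ^V. -/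
open Finset
open scoped Classical

noncomputable section

/-- Vertex type of the digraph `D = (V ∪ {s,t}, A)`: `Sum.inl v` is an internal vertex,
`Sum.inr false` is the source `s`, `Sum.inr true` is the destination `t`. -/
abbrev Vtx (V : Type*) := V ⊕ Bool

/-- The sequence of vertices `s, v₁, …, vₙ, t` of an `s`-`t` walk whose list of internal
vertices is `L`. -/
def pathVerts {V : Type*} (L : List V) : List (Vtx V) :=
  Sum.inr false :: (L.map Sum.inl ++ [Sum.inr true])

/-- `L` is the list of internal vertices of a (simple) `s`-`t` path of the digraph with
arc relation `A`. -/
def IsSTPath {V : Type*} (A : Vtx V → Vtx V → Prop) (L : List V) : Prop :=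
  L.Nodup ∧ (pathVerts L).Chain' A

/-- The total length of the `s`-`t` path with internal-vertex list `L`, for arc
lengths `l`. -/
def pathLen {V : Type*} (l : Vtx V → Vtx V → ℝ) (L : List V) : ℝ :=
  (List.zipWith l (pathVerts L) (pathVerts L).tail).sum

/-- Membership in `𝒫`: `L` is the internal-vertex list of an `s`-`t` path of length at
most `d`. -/
def memP {V : Type*} (A : Vtx V → Vtx V → Prop) (l : Vtx V → Vtx V → ℝ) (d : ℝ)
    (L : List V) : Prop :=
  IsSTPath A L ∧ pathLen l L ≤ d

/-- The integer points of `P(D,d)`: vectors `x ∈ {0,1}^V` with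
`Σ_{v internal vertex of P} x_v ≥ 1` for every path `P ∈ 𝒫`. -/
def blockerSet {V : Type*} [Fintype V] (A : Vtx V → Vtx V → Prop)
    (l : Vtx V → Vtx V → ℝ) (d : ℝ) : Set (V → ℝ) :=
  {x | (∀ v, x v = 0 ∨ x v = 1) ∧
    ∀ L : List V, memP A l d L → 1 ≤ ∑ v ∈ L.toFinset, x v}

/-- **Theorem 3.1.1**: if every `s`-`t` path of `D` of length at most `d` has at least
two internal vertices, then `P(D,d)` is full-dimensional. -/
theorem stmt_6 {V : Type*} [Fintype V]
    (A : Vtx V → Vtx V → Prop) (l : Vtx V → Vtx V → ℝ) (d : ℝ)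
    (hl : ∀ x y, 0 ≤ l x y) (hd : 0 < d)
    (h2 : ∀ L : List V, memP A l d L → 2 ≤ L.length) :
    affineSpan ℝ (convexHull ℝ (blockerSet A l d)) = ⊤ := by
  have hmem : ∀ w : Option V, (fun u => if w = some u then (0:ℝ) else 1) ∈ blockerSet A l d := by
    intro w
    refine ⟨fun v => by by_cases h : w = some v <;> simp [h], ?_⟩
    intro L hL
    have hlen := h2 L hL
    have hnd : L.Nodup := hL.1.1
    have hcard : L.toFinset.card = L.length := List.toFinset_card_of_nodup hnd
    have hex : ∃ v ∈ L.toFinset, w ≠ some v := by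
      obtain ⟨a, ha, b, hb, hab⟩ := Finset.one_lt_card.mp (by omega : 1 < L.toFinset.card)
      by_cases hwa : w = some a
      · refine ⟨b, hb, ?_⟩
        rw [hwa]
        intro h
        exact hab (Option.some.inj h)
      · exact ⟨a, ha, hwa⟩
    obtain ⟨v, hv, hwv⟩ := hex
    calc (1:ℝ) = (fun u => if w = some u then (0:ℝ) else 1) v := by simp [hwv]
      _ ≤ _ := Finset.single_le_sum (f := fun u => if w = some u then (0:ℝ) else 1)
        (fun i _ => by split_ifs <;> norm_num) hv
  rw [affineSpan_convexHull]
  have h1 := subset_affineSpan ℝ _ (hmem none)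
  rw [← AffineSubspace.direction_eq_top_iff_of_nonempty ⟨_, h1⟩, eq_top_iff,
    ← (Pi.basisFun ℝ V).span_eq, Submodule.span_le]
  rintro _ ⟨v, rfl⟩
  have h3 := AffineSubspace.vsub_mem_direction h1 (subset_affineSpan ℝ _ (hmem (some v)))
  rw [SetLike.mem_coe]
  convert h3 using 1
  ext u
  by_cases h : v = u
  · subst h; simp
  · simp [h, Pi.single_apply, Ne.symm h]

end
end

section
/- The optimal value of the maximum flow blocker problem, min{ Σ_{a∈B} r(a) : B ⊆ A a feasible blocker }, equals min{ Σ_{a∈B} r(a) : U ⊆ V with s ∈ U and t ∉ U, B ⊆ δ⁺(U), and Σ_{a∈δ⁺(U)∖B} c(a) ≤ Φ }. In particular, there exists an optimal blocker B* that is contained in δ⁺(U) for some vertex set U with s ∈ U and t ∉ U such that the non-blocked arcs of the cut δ⁺(U) have total capacity at most Φ. -/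
open Finset
open scoped Classical

noncomputable section

/-- `f` is an `s`-`t` flow on the digraph with arc set `arcs` and capacities `c`:
capacity bounds on arcs, zero outside arcs, and flow conservation at every vertex
other than `s` and `t`. -/
def IsFlow {V : Type*} [Fintype V] (arcs : Finset (V × V)) (c : V × V → ℕ)
    (s t : V) (f : V × V → ℝ) : Prop :=
  (∀ a ∈ arcs, 0 ≤ f a ∧ f a ≤ (c a : ℝ)) ∧ (∀ a ∉ arcs, f a = 0) ∧
  ∀ v : V, v ≠ s → v ≠ t →
    ∑ a ∈ arcs.filter (fun a => a.2 = v), f a = ∑ a ∈ arcs.filter (fun a => a.1 = v), f a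

/-- The value of the flow `f`: net flow out of the source `s`. -/
def flowValue {V : Type*} [Fintype V] (arcs : Finset (V × V)) (s : V) (f : V × V → ℝ) : ℝ :=
  ∑ a ∈ arcs.filter (fun a => a.1 = s), f a - ∑ a ∈ arcs.filter (fun a => a.2 = s), f a

/-- `δ⁺(U)`: the arcs of `A` with tail in `U` and head outside `U`. -/
def outCut {V : Type*} (A : Finset (V × V)) (U : Finset V) : Finset (V × V) :=
  A.filter (fun a => a.1 ∈ U ∧ a.2 ∉ U)

/-- `B ⊆ A` is a feasible blocker: the maximum `s`-`t` flow value in `(V, A ∖ B)` is at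
most `Φ`, i.e. every `s`-`t` flow in `(V, A ∖ B)` has value at most `Φ`. -/
def FeasibleBlocker {V : Type*} [Fintype V] (A : Finset (V × V)) (c : V × V → ℕ)
    (s t : V) (Φ : ℕ) (B : Finset (V × V)) : Prop :=
  ∀ f : V × V → ℝ, IsFlow (A \ B) c s t f → flowValue (A \ B) s f ≤ (Φ : ℝ)

def exc {V : Type*} [Fintype V] (f : V × V → ℝ) (v : V) : ℝ :=
  ∑ w, f (v, w) - ∑ w, f (w, v)

lemma sum_filter_fst {V : Type*} [Fintype V] (arcs : Finset (V × V)) (f : V × V → ℝ)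
    (h : ∀ a ∉ arcs, f a = 0) (v : V) :
    ∑ a ∈ arcs.filter (fun a => a.1 = v), f a = ∑ w, f (v, w) := by
  have h1 : ∑ a ∈ arcs.filter (fun a => a.1 = v), f a
      = ∑ a : V × V, if a.1 = v then f a else 0 := by
    rw [Finset.sum_filter]
    apply Finset.sum_subset (Finset.subset_univ _)
    intro a _ ha
    simp [h a ha]
  rw [h1, Fintype.sum_prod_type, Finset.sum_comm]
  simp

lemma sum_filter_snd {V : Type*} [Fintype V] (arcs : Finset (V × V)) (f : V × V → ℝ)
    (h : ∀ a ∉ arcs, f a = 0) (v : V) :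
    ∑ a ∈ arcs.filter (fun a => a.2 = v), f a = ∑ w, f (w, v) := by
  have h1 : ∑ a ∈ arcs.filter (fun a => a.2 = v), f a
      = ∑ a : V × V, if a.2 = v then f a else 0 := by
    rw [Finset.sum_filter]
    apply Finset.sum_subset (Finset.subset_univ _)
    intro a _ ha
    simp [h a ha]
  rw [h1, Fintype.sum_prod_type]
  simp

lemma flowValue_eq {V : Type*} [Fintype V] (arcs : Finset (V × V)) (f : V × V → ℝ)
    (h : ∀ a ∉ arcs, f a = 0) (v : V) : flowValue arcs v f = exc f v := by
  unfold flowValue exc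
  rw [sum_filter_fst arcs f h, sum_filter_snd arcs f h]

lemma isFlow_iff {V : Type*} [Fintype V] (arcs : Finset (V × V)) (c : V × V → ℕ)
    (s t : V) (f : V × V → ℝ) : IsFlow arcs c s t f ↔
    (∀ a ∈ arcs, 0 ≤ f a ∧ f a ≤ (c a : ℝ)) ∧ (∀ a ∉ arcs, f a = 0) ∧
      ∀ v : V, v ≠ s → v ≠ t → exc f v = 0 := by
  unfold IsFlow
  refine and_congr_right fun _ => and_congr_right fun h => ?_
  refine forall_congr' fun v => ?_
  rw [sum_filter_fst arcs f h, sum_filter_snd arcs f h]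
  unfold exc
  rw [sub_eq_zero, eq_comm]

lemma sum_exc {V : Type*} [Fintype V] (f : V × V → ℝ) (U : Finset V) :
    ∑ v ∈ U, exc f v = ∑ v ∈ U, ∑ w ∈ Uᶜ, f (v, w) - ∑ v ∈ U, ∑ w ∈ Uᶜ, f (w, v) := by
  unfold exc
  rw [Finset.sum_sub_distrib]
  have h1 : ∀ v, ∑ w, f (v, w) = ∑ w ∈ U, f (v, w) + ∑ w ∈ Uᶜ, f (v, w) := fun v =>
    (Finset.sum_add_sum_compl U _).symm
  have h2 : ∀ v, ∑ w, f (w, v) = ∑ w ∈ U, f (w, v) + ∑ w ∈ Uᶜ, f (w, v) := fun v =>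
    (Finset.sum_add_sum_compl U _).symm
  simp only [h1, h2, Finset.sum_add_distrib]
  rw [Finset.sum_comm (s := U) (t := U)]
  ring

lemma value_eq_cut {V : Type*} [Fintype V] {arcs : Finset (V × V)} {c : V × V → ℕ}
    {s t : V} {f : V × V → ℝ} (hf : IsFlow arcs c s t f) {U : Finset V}
    (hs : s ∈ U) (ht : t ∉ U) :
    flowValue arcs s f = ∑ v ∈ U, ∑ w ∈ Uᶜ, f (v, w) - ∑ v ∈ U, ∑ w ∈ Uᶜ, f (w, v) := by
  rw [isFlow_iff] at hf
  rw [flowValue_eq _ _ hf.2.1, ← sum_exc]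
  symm
  apply Finset.sum_eq_single_of_mem s hs
  intro v hv hvs
  exact hf.2.2 v hvs (fun h => ht (h ▸ hv))

lemma sum_outCut {V : Type*} [Fintype V] (arcs : Finset (V × V)) (U : Finset V)
    (g : V × V → ℝ) : ∑ a ∈ outCut arcs U, g a =
      ∑ v ∈ U, ∑ w ∈ Uᶜ, if (v, w) ∈ arcs then g (v, w) else 0 := by
  have : outCut arcs U = (U ×ˢ Uᶜ).filter (fun a => a ∈ arcs) := by
    ext a
    simp only [outCut, Finset.mem_filter, Finset.mem_product, Finset.mem_compl]
    tauto
  rw [this, Finset.sum_filter, Finset.sum_product]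

lemma weak_duality {V : Type*} [Fintype V] {arcs : Finset (V × V)} {c : V × V → ℕ}
    {s t : V} {f : V × V → ℝ} (hf : IsFlow arcs c s t f) {U : Finset V}
    (hs : s ∈ U) (ht : t ∉ U) : flowValue arcs s f ≤ ∑ a ∈ outCut arcs U, (c a : ℝ) := by
  rw [value_eq_cut hf hs ht, sum_outCut]
  have hnn : ∀ a, 0 ≤ f a := fun a => by
    by_cases ha : a ∈ arcs
    · exact (hf.1 a ha).1
    · exact (hf.2.1 a ha).ge
  have h1 : 0 ≤ ∑ v ∈ U, ∑ w ∈ Uᶜ, f (w, v) :=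
    Finset.sum_nonneg fun v _ => Finset.sum_nonneg fun w _ => hnn _
  have h2 : ∑ v ∈ U, ∑ w ∈ Uᶜ, f (v, w) ≤
      ∑ v ∈ U, ∑ w ∈ Uᶜ, if (v, w) ∈ arcs then (c (v, w) : ℝ) else 0 := by
    refine Finset.sum_le_sum fun v _ => Finset.sum_le_sum fun w _ => ?_
    split_ifs with h
    · exact (hf.1 _ h).2
    · exact (hf.2.1 _ h).le
  linarith

lemma exists_max_flow {V : Type*} [Fintype V] (arcs : Finset (V × V)) (c : V × V → ℕ)
    (s t : V) : ∃ f, IsFlow arcs c s t f ∧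
      ∀ g, IsFlow arcs c s t g → flowValue arcs s g ≤ flowValue arcs s f := by
  have hK : IsCompact {f : V × V → ℝ | IsFlow arcs c s t f} := by
    apply IsCompact.of_isClosed_subset
      (isCompact_Icc (a := (0 : V × V → ℝ)) (b := fun a => (c a : ℝ)))
    · unfold IsFlow
      simp only [Set.setOf_and, Set.setOf_forall]
      refine IsClosed.inter ?_ (IsClosed.inter ?_ ?_)
      · refine isClosed_iInter fun a => isClosed_iInter fun _ => IsClosed.inter ?_ ?_
        · exact isClosed_le (by fun_prop) (by fun_prop)
        · exact isClosed_le (by fun_prop) (by fun_prop)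
      · refine isClosed_iInter fun a => isClosed_iInter fun _ => ?_
        exact isClosed_eq (by fun_prop) (by fun_prop)
      · refine isClosed_iInter fun a => isClosed_iInter fun _ => isClosed_iInter fun _ => ?_
        exact isClosed_eq (by fun_prop) (by fun_prop)
    · intro f hf
      constructor
      · intro a
        by_cases ha : a ∈ arcs
        · exact (hf.1 a ha).1
        · exact (hf.2.1 a ha).ge
      · intro a
        by_cases ha : a ∈ arcs
        · exact (hf.1 a ha).2
        · simp [hf.2.1 a ha]
  have hne : {f : V × V → ℝ | IsFlow arcs c s t f}.Nonempty :=
    ⟨fun _ => 0, by simp [IsFlow]⟩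
  have hc : Continuous (fun f : V × V → ℝ => flowValue arcs s f) := by
    unfold flowValue; fun_prop
  obtain ⟨f, hf, hm⟩ := hK.exists_isMaxOn hne hc.continuousOn
  exact ⟨f, hf, fun g hg => hm hg⟩

/-- Residual arc relation. -/
def Resid {V : Type*} (arcs : Finset (V × V)) (c : V × V → ℕ) (f : V × V → ℝ) (u v : V) : Prop :=
  ((u, v) ∈ arcs ∧ f (u, v) < c (u, v)) ∨ ((v, u) ∈ arcs ∧ 0 < f (v, u))

/-- Feasible directions at the flow `f`. -/
def FeasDir {V : Type*} (arcs : Finset (V × V)) (c : V × V → ℕ) (f d : V × V → ℝ) : Prop :=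
  ∀ a, (0 < d a → a ∈ arcs ∧ f a < c a) ∧ (d a < 0 → a ∈ arcs ∧ 0 < f a)

lemma FeasDir.add {V : Type*} {arcs : Finset (V × V)} {c : V × V → ℕ} {f d e : V × V → ℝ}
    (hd : FeasDir arcs c f d) (he : FeasDir arcs c f e) : FeasDir arcs c f (d + e) := by
  intro a
  simp only [Pi.add_apply]
  constructor
  · intro h
    by_cases h1 : 0 < d a
    · exact (hd a).1 h1
    · exact (he a).1 (by linarith)
  · intro h
    by_cases h1 : d a < 0
    · exact (hd a).2 h1
    · exact (he a).2 (by linarith)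

lemma exc_add {V : Type*} [Fintype V] (f g : V × V → ℝ) (v : V) :
    exc (f + g) v = exc f v + exc g v := by
  simp only [exc, Pi.add_apply, Finset.sum_add_distrib]; ring

lemma exc_smul {V : Type*} [Fintype V] (k : ℝ) (g : V × V → ℝ) (v : V) :
    exc (k • g) v = k * exc g v := by
  simp only [exc, Pi.smul_apply, smul_eq_mul, ← Finset.mul_sum]; ring

lemma exc_single {V : Type*} [Fintype V] (x y v : V) :
    exc (Pi.single (x, y) 1) v = (if v = x then 1 else 0) - (if v = y then 1 else 0) := by
  unfold exc
  simp only [Pi.single_apply, Prod.mk.injEq]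
  congr 1
  · by_cases h : v = x <;> simp [h]
  · by_cases h : v = y <;> simp [h]

lemma exists_dir {V : Type*} [Fintype V] {arcs : Finset (V × V)} {c : V × V → ℕ}
    {f : V × V → ℝ} {s v : V} (h : Relation.ReflTransGen (Resid arcs c f) s v) :
    ∃ d, FeasDir arcs c f d ∧
      ∀ u, exc d u = (if u = s then 1 else 0) - (if u = v then 1 else 0) := by
  induction h with
  | refl => exact ⟨0, by simp [FeasDir], by simp [exc]⟩
  | @tail x y _ hxy ih =>
    obtain ⟨d, hd, he⟩ := ih
    rcases hxy with ⟨ha, hf⟩ | ⟨ha, hf⟩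
    · refine ⟨d + Pi.single (x, y) 1, hd.add ?_, fun u => ?_⟩
      · intro a
        by_cases h : a = (x, y)
        · subst h
          simp only [Pi.single_eq_same]
          exact ⟨fun _ => ⟨ha, hf⟩, fun h => by linarith⟩
        · simp [Pi.single_eq_of_ne h]
      · rw [exc_add, he, exc_single]; ring
    · refine ⟨d + (-1 : ℝ) • Pi.single (y, x) 1, hd.add ?_, fun u => ?_⟩
      · intro a
        by_cases h : a = (y, x)
        · subst h
          simp only [Pi.smul_apply, Pi.single_eq_same, smul_eq_mul]
          exact ⟨fun h => by linarith, fun _ => ⟨ha, hf⟩⟩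
        · simp [Pi.single_eq_of_ne h]
      · rw [exc_add, exc_smul, he, exc_single]; ring

lemma exists_step {V : Type*} [Fintype V] {arcs : Finset (V × V)} {c : V × V → ℕ}
    {f d : V × V → ℝ} (hf : ∀ a ∈ arcs, 0 ≤ f a ∧ f a ≤ (c a : ℝ))
    (hd : FeasDir arcs c f d) :
    ∃ ε : ℝ, 0 < ε ∧ ∀ a ∈ arcs, 0 ≤ f a + ε * d a ∧ f a + ε * d a ≤ (c a : ℝ) := by
  have key : ∀ a : V × V, ∀ᶠ ε : ℝ in nhdsWithin 0 (Set.Ioi 0),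
      a ∈ arcs → 0 ≤ f a + ε * d a ∧ f a + ε * d a ≤ (c a : ℝ) := by
    intro a
    by_cases ha : a ∈ arcs
    swap
    · exact Filter.Eventually.of_forall fun _ h => absurd h ha
    have ht : Filter.Tendsto (fun ε : ℝ => f a + ε * d a) (nhdsWithin 0 (Set.Ioi 0))
        (nhds (f a)) := by
      have : Continuous (fun ε : ℝ => f a + ε * d a) := by fun_prop
      have h0 := this.tendsto 0
      simp only [zero_mul, add_zero] at h0
      exact h0.mono_left nhdsWithin_le_nhds
    have hpos : ∀ᶠ ε : ℝ in nhdsWithin 0 (Set.Ioi 0), 0 < ε := self_mem_nhdsWithin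
    have hl : ∀ᶠ ε : ℝ in nhdsWithin 0 (Set.Ioi 0), 0 ≤ f a + ε * d a := by
      by_cases h : d a < 0
      · filter_upwards [ht.eventually (lt_mem_nhds ((hd a).2 h).2)] with ε h using h.le
      · filter_upwards [hpos] with ε hε
        have := mul_nonneg hε.le (not_lt.1 h)
        linarith [(hf a ha).1]
    have hu : ∀ᶠ ε : ℝ in nhdsWithin 0 (Set.Ioi 0), f a + ε * d a ≤ c a := by
      by_cases h : 0 < d a
      · filter_upwards [ht.eventually (gt_mem_nhds ((hd a).1 h).2)] with ε h using h.le
      · filter_upwards [hpos] with ε hε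
        have := mul_nonneg hε.le (neg_nonneg.2 (not_lt.1 h))
        linarith [(hf a ha).2]
    filter_upwards [hl, hu] with ε h1 h2 _ using ⟨h1, h2⟩
  have hpos : ∀ᶠ ε : ℝ in nhdsWithin 0 (Set.Ioi 0), 0 < ε := self_mem_nhdsWithin
  obtain ⟨ε, h1, h2⟩ := (hpos.and (Filter.eventually_all.2 key)).exists
  exact ⟨ε, h1, h2⟩

lemma strong_duality {V : Type*} [Fintype V] (arcs : Finset (V × V)) (c : V × V → ℕ)
    {s t : V} (hst : s ≠ t) : ∃ f, IsFlow arcs c s t f ∧ ∃ U : Finset V, s ∈ U ∧ t ∉ U ∧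
      flowValue arcs s f = ∑ a ∈ outCut arcs U, (c a : ℝ) := by
  obtain ⟨f, hf, hmax⟩ := exists_max_flow arcs c s t
  set U := Finset.univ.filter (fun v => Relation.ReflTransGen (Resid arcs c f) s v) with hU
  have hmem : ∀ v, v ∈ U ↔ Relation.ReflTransGen (Resid arcs c f) s v := fun v => by simp [hU]
  have hs : s ∈ U := (hmem s).2 Relation.ReflTransGen.refl
  have ht : t ∉ U := by
    rw [hmem]
    intro h
    obtain ⟨d, hd, he⟩ := exists_dir h
    obtain ⟨ε, hε, hb⟩ := exists_step hf.1 hd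
    have hf' := (isFlow_iff _ _ _ _ _).1 hf
    have hd0 : ∀ a ∉ arcs, d a = 0 := fun a ha =>
      le_antisymm (not_lt.1 fun h => ha ((hd a).1 h).1) (not_lt.1 fun h => ha ((hd a).2 h).1)
    have hg : IsFlow arcs c s t (f + ε • d) := by
      rw [isFlow_iff]
      refine ⟨hb, fun a ha => by simp [hd0 a ha, hf.2.1 a ha], fun v hs ht => ?_⟩
      rw [exc_add, exc_smul, he, hf'.2.2 v hs ht]
      simp [hs, ht]
    have := hmax _ hg
    rw [flowValue_eq _ _ hg.2.1, flowValue_eq _ _ hf.2.1, exc_add, exc_smul, he] at this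
    simp only [if_true, if_neg hst] at this
    linarith
  refine ⟨f, hf, U, hs, ht, ?_⟩
  rw [value_eq_cut hf hs ht, sum_outCut]
  have h1 : ∑ v ∈ U, ∑ w ∈ Uᶜ, f (w, v) = 0 := by
    refine Finset.sum_eq_zero fun v hv => Finset.sum_eq_zero fun w hw => ?_
    by_contra hne
    have ha : (w, v) ∈ arcs := by
      by_contra ha
      exact hne (hf.2.1 _ ha)
    refine Finset.mem_compl.1 hw ((hmem w).2 (((hmem v).1 hv).tail (Or.inr ⟨ha, ?_⟩)))
    exact lt_of_le_of_ne (hf.1 _ ha).1 (Ne.symm hne)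
  rw [h1, sub_zero]
  refine Finset.sum_congr rfl fun v hv => Finset.sum_congr rfl fun w hw => ?_
  split_ifs with ha
  · by_contra hne
    refine Finset.mem_compl.1 hw ((hmem w).2 (((hmem v).1 hv).tail (Or.inl ⟨ha, ?_⟩)))
    exact lt_of_le_of_ne (hf.1 _ ha).2 hne
  · exact hf.2.1 _ ha

theorem outCut_sdiff {V : Type*} (A B : Finset (V × V)) (U : Finset V) :
    outCut (A \ B) U = outCut A U \ B := by
  ext a
  simp only [outCut, Finset.mem_filter, Finset.mem_sdiff]
  tauto

lemma feasible_iff {V : Type*} [Fintype V] (A : Finset (V × V)) {s t : V} (hst : s ≠ t)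
    (c : V × V → ℕ) (Φ : ℕ) (B : Finset (V × V)) : FeasibleBlocker A c s t Φ B ↔
      ∃ U : Finset V, s ∈ U ∧ t ∉ U ∧ (∑ a ∈ outCut A U \ B, c a) ≤ Φ := by
  constructor
  · intro h
    obtain ⟨f, hf, U, hs, ht, hv⟩ := strong_duality (A \ B) c hst
    refine ⟨U, hs, ht, ?_⟩
    have := h f hf
    rw [hv, outCut_sdiff] at this
    exact_mod_cast this
  · rintro ⟨U, hs, ht, hc⟩ f hf
    refine (weak_duality hf hs ht).trans ?_
    rw [outCut_sdiff]
    exact_mod_cast hc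

/-- **Theorem 3.2.1** (structure of maximum flow blockers): the optimal value of the
maximum flow blocker problem equals the minimum of `Σ_{a∈B} r(a)` over all pairs
`(U, B)` with `s ∈ U`, `t ∉ U`, `B ⊆ δ⁺(U)` and `Σ_{a ∈ δ⁺(U)∖B} c(a) ≤ Φ`; in
particular, some optimal blocker is contained in `δ⁺(U)` for such a vertex set `U`. -/
theorem stmt_8 {V : Type*} [Fintype V] (A : Finset (V × V)) (s t : V) (hst : s ≠ t)
    (c r : V × V → ℕ) (Φ : ℕ) :
    sInf {w : ℕ | ∃ B ⊆ A, FeasibleBlocker A c s t Φ B ∧ w = ∑ a ∈ B, r a} =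
      sInf {w : ℕ | ∃ U : Finset V, ∃ B ⊆ outCut A U, s ∈ U ∧ t ∉ U ∧
        (∑ a ∈ outCut A U \ B, c a) ≤ Φ ∧ w = ∑ a ∈ B, r a} ∧
    ∃ B ⊆ A, FeasibleBlocker A c s t Φ B ∧
      (∑ a ∈ B, r a) =
        sInf {w : ℕ | ∃ B' ⊆ A, FeasibleBlocker A c s t Φ B' ∧ w = ∑ a ∈ B', r a} ∧
      ∃ U : Finset V, s ∈ U ∧ t ∉ U ∧ B ⊆ outCut A U ∧
        (∑ a ∈ outCut A U \ B, c a) ≤ Φ := by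
  have hsub : ∀ B ⊆ A, FeasibleBlocker A c s t Φ B → ∃ U : Finset V, ∃ B' ⊆ outCut A U,
      s ∈ U ∧ t ∉ U ∧ (∑ a ∈ outCut A U \ B', c a) ≤ Φ ∧ ∑ a ∈ B', r a ≤ ∑ a ∈ B, r a := by
    intro B _ h
    obtain ⟨U, hs, ht, hc⟩ := (feasible_iff A hst c Φ B).1 h
    refine ⟨U, outCut A U ∩ B, Finset.inter_subset_left, hs, ht, ?_, ?_⟩
    · rwa [Finset.sdiff_inter_self_left]
    · exact Finset.sum_le_sum_of_subset Finset.inter_subset_right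
  have hA : ∀ U : Finset V, outCut A U ⊆ A := fun U => Finset.filter_subset _ _
  set S := {w : ℕ | ∃ B ⊆ A, FeasibleBlocker A c s t Φ B ∧ w = ∑ a ∈ B, r a} with hS
  set T := {w : ℕ | ∃ U : Finset V, ∃ B ⊆ outCut A U, s ∈ U ∧ t ∉ U ∧
        (∑ a ∈ outCut A U \ B, c a) ≤ Φ ∧ w = ∑ a ∈ B, r a} with hT
  have hTS : T ⊆ S := by
    rintro w ⟨U, B, hB, hs, ht, hc, rfl⟩
    exact ⟨B, hB.trans (hA U), (feasible_iff A hst c Φ B).2 ⟨U, hs, ht, hc⟩, rfl⟩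
  have hTne : T.Nonempty :=
    ⟨_, {s}, outCut A {s}, subset_rfl, by simp, by simpa using hst.symm, by simp, rfl⟩
  have hSne : S.Nonempty := hTne.mono hTS
  have heq : sInf S = sInf T := by
    apply le_antisymm
    · exact Nat.sInf_le (hTS (Nat.sInf_mem hTne))
    · obtain ⟨B, hB, hfe, hw⟩ := Nat.sInf_mem hSne
      obtain ⟨U, B', hB', hs, ht, hc, hle⟩ := hsub B hB hfe
      rw [hw]
      exact (Nat.sInf_le (show _ ∈ T from ⟨U, B', hB', hs, ht, hc, rfl⟩)).trans hle
  refine ⟨heq, ?_⟩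
  obtain ⟨U, B, hB, hs, ht, hc, hw⟩ := Nat.sInf_mem hTne
  exact ⟨B, hB.trans (hA U), (feasible_iff A hst c Φ B).2 ⟨U, hs, ht, hc⟩,
    by rw [heq, hw], U, hs, ht, hB, hc⟩


end
end

section
/- Let n ≥ 1 and m ≥ 1 be integers, and set α = ⌈n/m⌉, n_{α−1} = mα − n, and n_α = n − m(α−1). The minimum number of edges that must be deleted from the complete graph on n vertices so that the resulting graph contains no clique of size m+1 equals n_{α−1}·(α−1)(α−2)/2 + n_α·α(α−1)/2. -/
open Finset

lemma turan_aux (m s k : ℕ) (hs : s ≤ m) (hm : 1 ≤ m) :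
    #(SimpleGraph.turanGraph (m * k + s) m).edgeFinset +
      ((m - s) * k.choose 2 + s * (k + 1).choose 2) = (m * k + s).choose 2 := by
  induction k with
  | zero =>
    have h1 : SimpleGraph.turanGraph (m * 0 + s) m = ⊤ := by
      rw [SimpleGraph.turanGraph_eq_top]; right; omega
    have := SimpleGraph.card_edgeFinset_top_eq_card_choose_two (V := Fin (m * 0 + s))
    rw [Fintype.card_fin] at this
    have h2 : #(SimpleGraph.turanGraph (m * 0 + s) m).edgeFinset = (m * 0 + s).choose 2 := by
      rw [← this]; congr!
    rw [h2]; simp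
  | succ k ih =>
    have e : m * (k + 1) + s = (m * k + s) + m := by ring
    rw [e, SimpleGraph.card_edgeFinset_turanGraph_add]
    have c1 : (m * k + s + m).choose 2 =
        (m * k + s).choose 2 + (m * k + s) * m + m.choose 2 := by
      rw [Nat.add_choose_eq]
      simp [Finset.Nat.antidiagonal_succ]
      ring
    have c2 : (k + 1 + 1).choose 2 = (k + 1) + (k + 1).choose 2 := by
      rw [Nat.choose_succ_succ' (k + 1) 1]; simp
    have c3 : (k + 1).choose 2 = k + k.choose 2 := by
      rw [Nat.choose_succ_succ' k 1]; simp
    rw [c1, ← ih, c2, c3]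
    obtain ⟨t, rfl⟩ := Nat.exists_eq_add_of_le hs
    obtain ⟨r, hr⟩ := Nat.exists_eq_add_of_le' hm
    have e1 : s + t - s = t := by omega
    have e2 : s + t - 1 = r := by omega
    rw [e1, e2]
    have e3 : ((s + t) * k + s) * (s + t) = ((s + t) * k + s) * r + ((s + t) * k + s) := by
      rw [hr]; ring
    rw [e3]
    ring

/-- **Proposition 4.2.3** (`f(K,m)`): with `α = ⌈n/m⌉`, `n_{α-1} = mα - n` and
`n_α = n - m(α-1)`, the minimum number of edges whose deletion from the complete graph
`K_n` leaves a graph with no clique of size `m+1` equals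
`n_{α-1}·(α-1)(α-2)/2 + n_α·α(α-1)/2`. -/
theorem stmt_9 (n m : ℕ) (hn : 1 ≤ n) (hm : 1 ≤ m) :
    sInf {d : ℕ | ∃ H : SimpleGraph (Fin n), H.CliqueFree (m + 1) ∧
        d = n.choose 2 - Nat.card H.edgeSet} =
      (m * ((n + m - 1) / m) - n) *
          ((((n + m - 1) / m) - 1) * (((n + m - 1) / m) - 2) / 2) +
        (n - m * (((n + m - 1) / m) - 1)) *
          ((((n + m - 1) / m)) * (((n + m - 1) / m) - 1) / 2) := by
  obtain ⟨k, s, hs1, hsm, rfl⟩ : ∃ k s, 1 ≤ s ∧ s ≤ m ∧ n = m * k + s := by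
    refine ⟨(n - 1) / m, (n - 1) % m + 1, by omega, Nat.mod_lt _ hm, ?_⟩
    have := Nat.div_add_mod (n - 1) m
    omega
  have hα : (m * k + s + m - 1) / m = k + 1 := by
    rw [show m * k + s + m - 1 = (s - 1) + m * (k + 1) by rw [mul_add]; omega,
      Nat.add_mul_div_left _ _ hm, Nat.div_eq_of_lt (by omega)]
    omega
  have h := turan_aux m s k hsm hm
  have e1 : m * (k + 1) - (m * k + s) = m - s := by rw [mul_add]; omega
  have e2 : m * k + s - m * k = s := by omega
  have e3 : k + 1 - 1 = k := rfl
  have e4 : k + 1 - 2 = k - 1 := by omega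
  have e5 : (k + 1) * k / 2 = (k + 1).choose 2 := by rw [Nat.choose_two_right, e3]
  rw [hα, e3, e4, e1, e2, e5, ← Nat.choose_two_right]
  apply le_antisymm
  · apply Nat.sInf_le
    refine ⟨SimpleGraph.turanGraph _ m, SimpleGraph.turanGraph_cliqueFree hm, ?_⟩
    rw [Nat.card_eq_fintype_card, ← SimpleGraph.edgeFinset_card]
    omega
  · apply le_csInf
    · exact ⟨_, SimpleGraph.turanGraph _ m, SimpleGraph.turanGraph_cliqueFree hm, rfl⟩
    · rintro d ⟨H, hH, rfl⟩
      classical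
      have := (SimpleGraph.isTuranMaximal_turanGraph (n := m * k + s) hm).2 hH
      rw [Nat.card_eq_fintype_card, ← SimpleGraph.edgeFinset_card]
      omega
end

section
/- For every integer n ≥ 4, the minimum number of chords (edges joining two non-consecutive vertices of the cycle) that must be added to the cycle C_n so that the resulting graph is an interval graph equals n − 3. -/
open Finset

/-- `H` is an interval graph: each vertex can be assigned a nonempty closed real
interval such that two distinct vertices are adjacent iff their intervals intersect. -/
def IsIntervalGraph {W : Type*} (H : SimpleGraph W) : Prop :=
  ∃ a b : W → ℝ, (∀ v, a v ≤ b v) ∧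
    ∀ u v : W, u ≠ v →
      (H.Adj u v ↔ (Set.Icc (a u) (b u) ∩ Set.Icc (a v) (b v)).Nonempty)

theorem icc_inter {a b c d : ℝ} (h : a ≤ b) (h' : c ≤ d) :
    (Set.Icc a b ∩ Set.Icc c d).Nonempty ↔ a ≤ d ∧ c ≤ b := by
  rw [Set.Icc_inter_Icc, Set.nonempty_Icc]
  simp only [sup_le_iff, le_inf_iff]
  tauto

/-- The cycle stays connected after deleting one vertex. -/
theorem cross_edge (m : ℕ) (p x y : Fin (m + 4)) (P : Fin (m + 4) → Prop)
    (hx : P x) (hy : ¬ P y) (hxp : x ≠ p) (hyp : y ≠ p) :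
    ∃ u v, P u ∧ ¬ P v ∧ u ≠ p ∧ (SimpleGraph.cycleGraph (m + 4)).Adj u v := by
  by_contra hcon
  push Not at hcon
  have key : ∀ k : ℕ, k + 1 < m + 4 →
      (P (p + Fin.ofNat (m + 4) (k + 1)) ↔ P (p + 1)) := by
    intro k
    induction k with
    | zero => intro _; rfl
    | succ k ih =>
      intro hk
      rw [← ih (by omega)]
      have hadj : (SimpleGraph.cycleGraph (m + 4)).Adj (p + Fin.ofNat (m + 4) (k + 1 + 1))
          (p + Fin.ofNat (m + 4) (k + 1)) := by
        rw [SimpleGraph.cycleGraph_adj]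
        left
        rw [add_sub_add_left_eq_sub, sub_eq_iff_eq_add]
        ext
        simp [Fin.val_add, Nat.add_comm]
      have hne : ∀ j, j + 1 < m + 4 → p + Fin.ofNat (m + 4) (j + 1) ≠ p := by
        intro j hj h
        rw [add_eq_left] at h
        have := congrArg Fin.val h
        simp [Nat.mod_eq_of_lt hj] at this
      constructor
      · intro h
        by_contra h2
        exact hcon _ _ h h2 (hne _ hk) hadj
      · intro h
        by_contra h2
        exact hcon _ _ h h2 (hne _ (by omega)) hadj.symm
  have all : ∀ z, z ≠ p → (P z ↔ P (p + 1)) := by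
    intro z hz
    have h0 : (z - p).val ≠ 0 := by
      intro h
      exact hz (sub_eq_zero.mp (Fin.ext h))
    have := key ((z - p).val - 1) (by have := (z - p).isLt; omega)
    rw [Nat.sub_add_cancel (by omega)] at this
    have e : Fin.ofNat (m + 4) (z - p).val = z - p := by simp
    rw [e, add_sub_cancel] at this
    exact this
  exact hy ((all y hyp).mpr ((all x hxp).mp hx))

theorem sum_min (m : ℕ) : ∑ k ∈ range (m + 2), min k 2 = 2 * m + 1 := by
  induction m with
  | zero => rfl
  | succ k ih => rw [sum_range_succ, ih]; omega

theorem lower (m : ℕ) (H : SimpleGraph (Fin (m + 4)))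
    (hC : SimpleGraph.cycleGraph (m + 4) ≤ H) (hI : IsIntervalGraph H) :
    2 * m + 5 ≤ Nat.card H.edgeSet := by
  classical
  obtain ⟨a, b, hab, hadj⟩ := hI
  have hadj' : ∀ u v, u ≠ v → (H.Adj u v ↔ a u ≤ b v ∧ a v ≤ b u) := fun u v h => by
    rw [hadj u v h, icc_inter (hab u) (hab v)]
  set σ := Tuple.sort a with hσ
  have hmono : Monotone (a ∘ σ) := Tuple.monotone_sort a
  let B : Fin (m + 4) → Finset (Fin (m + 4)) := fun k =>
    univ.filter fun j => j < k ∧ H.Adj (σ j) (σ k)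
  -- any crossing edge gives a back neighbour
  have hback : ∀ k p x : Fin (m + 4), p ≠ k → ¬ k < p → x < k → x ≠ p → ∃ u ∈ B k, u ≠ p := by
    intro k p x hpk hpk' hxk hxp
    obtain ⟨u, v, hu, hv, hup, huv⟩ := cross_edge m (σ p) (σ x) (σ k) (fun z => σ.symm z < k)
      (by simpa using hxk) (by simp) (by simpa using hxp) (by simpa using hpk.symm)
    have hH := hC huv
    rw [hadj' u v huv.ne] at hH
    refine ⟨σ.symm u, ?_, ?_⟩
    · simp only [B, mem_filter, mem_univ, true_and]
      refine ⟨hu, ?_⟩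
      have hne : u ≠ σ k := by
        rintro rfl
        simp at hu
      rw [Equiv.apply_symm_apply, hadj' u _ hne]
      have h1 : a u ≤ a (σ k) := by simpa using hmono hu.le
      have h2 : a (σ k) ≤ a v := by simpa using hmono (not_lt.mp hv)
      exact ⟨h1.trans (hab _), h2.trans hH.2⟩
    · intro h
      exact hup (by rw [← h]; simp)
  have hB : ∀ k : Fin (m + 4), min k.val 2 ≤ (B k).card := by
    intro k
    rcases Nat.lt_or_ge k.val 1 with h | h
    · omega
    have hpos : 0 < (B k).card := by
      by_cases h1 : k.val = 1
      · -- the back neighbour is `0`: the edge in the cycle avoiding some later vertex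
        obtain ⟨q, hq⟩ : ∃ q : Fin (m + 4), q.val = 0 := ⟨0, rfl⟩
        have hlt : q < k := by rw [Fin.lt_def]; omega
        by_contra h0
        have h00 : B k = ∅ := by simpa using h0
        obtain ⟨r, hr⟩ : ∃ r : Fin (m + 4), r.val = 2 := ⟨⟨2, by omega⟩, rfl⟩
        obtain ⟨u, v, hu, hv, hup, huv⟩ := cross_edge m (σ r) (σ q) (σ k)
          (fun z => σ.symm z < k)
          (by simpa using hlt) (by simp)
          (by simp only [ne_eq, EmbeddingLike.apply_eq_iff_eq, Fin.ext_iff]; omega)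
          (by simp only [ne_eq, EmbeddingLike.apply_eq_iff_eq, Fin.ext_iff]; omega)
        have hH := hC huv
        rw [hadj' u v huv.ne] at hH
        have : σ.symm u ∈ B k := by
          simp only [B, mem_filter, mem_univ, true_and]
          refine ⟨hu, ?_⟩
          have hne : u ≠ σ k := by
            rintro rfl
            simp at hu
          rw [Equiv.apply_symm_apply, hadj' u _ hne]
          have h1 : a u ≤ a (σ k) := by simpa using hmono hu.le
          have h2 : a (σ k) ≤ a v := by simpa using hmono (not_lt.mp hv)
          exact ⟨h1.trans (hab _), h2.trans hH.2⟩
        simp [h00] at this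
      · obtain ⟨u, hu, -⟩ := hback k ⟨0, by omega⟩ ⟨1, by omega⟩
          (by simp only [ne_eq, Fin.ext_iff]; omega) (by simp [Fin.lt_def])
          (by rw [Fin.lt_def]; simp only; omega) (by simp [Fin.ext_iff])
        exact card_pos.mpr ⟨u, hu⟩
    by_cases h1 : k.val = 1
    · omega
    obtain ⟨p, hp⟩ := card_pos.mp hpos
    have hpk : p < k := (mem_filter.mp hp).2.1
    obtain ⟨x, hxk, hxp⟩ : ∃ x : Fin (m + 4), x < k ∧ x ≠ p := by
      by_cases h0 : p.val = 0
      · exact ⟨⟨1, by omega⟩, by rw [Fin.lt_def]; simp only; omega,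
          by simp only [ne_eq, Fin.ext_iff]; omega⟩
      · exact ⟨⟨0, by omega⟩, by rw [Fin.lt_def]; simp only; omega,
          by simp only [ne_eq, Fin.ext_iff]; omega⟩
    obtain ⟨u, hu, hup⟩ := hback k p x hpk.ne (not_lt.mpr hpk.le) hxk hxp
    have : 1 < (B k).card := one_lt_card.mpr ⟨u, hu, p, hp, hup⟩
    omega
  have hle : (univ.sigma B).card ≤ H.edgeFinset.card := by
    apply card_le_card_of_injOn (fun x => s(σ x.2, σ x.1))
    · intro x hx
      simp only [coe_sigma, Set.mem_sigma_iff, mem_coe] at hx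
      have := (mem_filter.mp hx.2).2.2
      simpa using this
    · rintro ⟨k, j⟩ hx ⟨k', j'⟩ hx' h
      simp only [coe_sigma, Set.mem_sigma_iff, mem_coe] at hx hx'
      have h1 := (mem_filter.mp hx.2).2.1
      have h2 := (mem_filter.mp hx'.2).2.1
      simp only [Sym2.eq_iff, EmbeddingLike.apply_eq_iff_eq] at h
      rcases h with ⟨rfl, rfl⟩ | ⟨rfl, rfl⟩
      · rfl
      · exact absurd h1 (not_lt.mpr h2.le)
  rw [card_sigma] at hle
  have hs : ∑ k : Fin (m + 4), min k.val 2 ≤ ∑ k, (B k).card := sum_le_sum fun k _ => hB k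
  rw [Fin.sum_univ_eq_sum_range (fun k => min k 2) (m + 4), sum_min (m + 2)] at hs
  rw [Nat.card_eq_fintype_card, ← SimpleGraph.edgeFinset_card]
  omega

/-- The fan: vertex `0` joined to all, and a path on the rest. -/
def fan (m : ℕ) : SimpleGraph (Fin (m + 4)) where
  Adj u v := u ≠ v ∧ (u.val = 0 ∨ v.val = 0 ∨ u.val + 1 = v.val ∨ v.val + 1 = u.val)
  symm := ⟨fun u v h => ⟨h.1.symm, by have := h.2; omega⟩⟩
  loopless := ⟨fun u h => h.1 rfl⟩

theorem fan_interval (m : ℕ) : IsIntervalGraph (fan m) := by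
  refine ⟨fun v => if v.val = 0 then 1 else (v.val : ℝ),
    fun v => if v.val = 0 then (m + 4 : ℝ) else (v.val : ℝ) + 1, ?_, ?_⟩
  · intro v
    dsimp only
    split_ifs
    · have : (0 : ℝ) ≤ m := Nat.cast_nonneg m
      linarith
    · linarith
  · intro u v huv
    rw [icc_inter]
    · have hu := u.isLt
      have hv := v.isLt
      have huv' : u.val ≠ v.val := fun h => huv (Fin.ext h)
      simp only [fan]
      split_ifs with h1 h2 h2 <;> norm_cast <;> simp only [ne_eq, Fin.ext_iff, Fin.val_zero] <;> omega
    all_goals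
      dsimp only
      split_ifs
      · have : (0 : ℝ) ≤ m := Nat.cast_nonneg m
        linarith
      · linarith

theorem cycle_le_fan (m : ℕ) : SimpleGraph.cycleGraph (m + 4) ≤ fan m := by
  have aux : ∀ u v : Fin (m + 4), u = 1 + v → u.val = 0 ∨ v.val + 1 = u.val := by
    intro u v h
    have := congrArg Fin.val h
    rw [Fin.val_add] at this
    have hv := v.isLt
    have h1 : ((1 : Fin (m + 4)) : ℕ) = 1 := rfl
    rw [h1] at this
    rcases Nat.lt_or_ge (1 + v.val) (m + 4) with h | h
    · rw [Nat.mod_eq_of_lt h] at this; omega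
    · have e : 1 + v.val = m + 4 := by omega
      rw [e, Nat.mod_self] at this
      exact Or.inl this
  intro u v h
  refine ⟨h.ne, ?_⟩
  rw [SimpleGraph.cycleGraph_adj, sub_eq_iff_eq_add, sub_eq_iff_eq_add] at h
  rcases h with h | h
  · have := aux _ _ h; omega
  · have := aux _ _ h; omega

theorem fan_card (m : ℕ) : Nat.card (fan m).edgeSet ≤ 2 * m + 5 := by
  classical
  rw [Nat.card_eq_fintype_card, ← SimpleGraph.edgeFinset_card]
  let S : Finset (Sym2 (Fin (m + 4))) :=
    (univ : Finset (Fin (m + 3))).image (fun i => s(0, i.succ)) ∪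
    (univ : Finset (Fin (m + 2))).image (fun i => s(i.castSucc.succ, i.succ.succ))
  have hS : S.card ≤ (m + 3) + (m + 2) := by
    refine (card_union_le _ _).trans (Nat.add_le_add ?_ ?_)
    · exact card_image_le.trans (by simp)
    · exact card_image_le.trans (by simp)
  have aux : ∀ u v : Fin (m + 4), u.val < v.val → (u.val = 0 ∨ u.val + 1 = v.val) → s(u, v) ∈ S := by
    intro u v huv h
    have hv := v.isLt
    simp only [S, mem_union, mem_image, mem_univ, true_and]
    by_cases h0 : u.val = 0
    · left
      refine ⟨⟨v.val - 1, by omega⟩, ?_⟩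
      rw [Sym2.eq_iff]
      exact Or.inl ⟨Fin.ext h0.symm, Fin.ext (Nat.sub_add_cancel (by omega))⟩
    · right
      refine ⟨⟨u.val - 1, by omega⟩, ?_⟩
      rw [Sym2.eq_iff]
      refine Or.inl ⟨Fin.ext (Nat.sub_add_cancel (by omega)), Fin.ext ?_⟩
      change u.val - 1 + 1 + 1 = v.val
      omega
  have : (fan m).edgeFinset ⊆ S := by
    intro e
    induction e with
    | _ u v =>
      intro h
      rw [SimpleGraph.mem_edgeFinset, SimpleGraph.mem_edgeSet] at h
      obtain ⟨hne, h⟩ := h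
      have hne' : u.val ≠ v.val := fun h => hne (Fin.ext h)
      rcases Nat.lt_or_ge u.val v.val with hl | hl
      · exact aux u v hl (by omega)
      · rw [Sym2.eq_swap]
        exact aux v u (by omega) (by omega)
  have := card_le_card this
  omega



/-- **Proposition 4.1.6**: for `n ≥ 4`, the minimum number of chords that must be added
to the cycle `C_n` so that the resulting graph is an interval graph equals `n - 3`.
(A supergraph `H ⊇ C_n` on the same vertices has exactly `|E(H)| - n` added chords.) -/
theorem stmt_10 (n : ℕ) (hn : 4 ≤ n) :
    sInf {d : ℕ | ∃ H : SimpleGraph (Fin n), SimpleGraph.cycleGraph n ≤ H ∧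
        IsIntervalGraph H ∧ d = Nat.card H.edgeSet - n} = n - 3 := by
  obtain ⟨m, rfl⟩ : ∃ m, n = m + 4 := ⟨n - 4, by omega⟩
  apply le_antisymm
  · refine le_trans (b := Nat.card (fan m).edgeSet - (m + 4)) (Nat.sInf_le
      ⟨fan m, cycle_le_fan m, fan_interval m, rfl⟩) ?_
    have := fan_card m
    omega
  · refine le_csInf ⟨Nat.card (fan m).edgeSet - (m + 4), fan m, cycle_le_fan m,
      fan_interval m, rfl⟩ ?_
    rintro d ⟨H, hC, hI, rfl⟩
    have := lower m H hC hI
    omega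
end

section
/- Let m = 2 and let K be a clique of G with |V(K)| ≥ 2. The inequality Σ_{e∈E(K)} z_e ≤ |V(K)| − 1 is valid for P_I(G, 2) (i.e., every feasible edge set I satisfies |I ∩ E(K)| ≤ |V(K)| − 1) and defines a facet of P_I(G, 2). -/
open Finset
open scoped Classical

noncomputable section

/-- An edge set of `G` (given as a subgraph `H ≤ G`) is feasible if `(V, I)` is an
interval graph which is `m`-clique free (contains no clique of size `m+1`). -/
def FeasibleEdges {V : Type*} (G H : SimpleGraph V) (m : ℕ) : Prop :=
  H ≤ G ∧ IsIntervalGraph H ∧ H.CliqueFree (m + 1)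

/-- The `m`-clique free interval subgraph polytope `P_I(G,m) ⊆ ℝ^E`: the convex hull of
the incidence vectors of feasible edge sets. -/
def PI {V : Type*} [Fintype V] (G : SimpleGraph V) (m : ℕ) : Set (G.edgeSet → ℝ) :=
  convexHull ℝ
    {z | ∃ H : SimpleGraph V, FeasibleEdges G H m ∧
      ∀ e : G.edgeSet, z e = if (e : Sym2 V) ∈ H.edgeSet then 1 else 0}

/-- `E(K)`: the edges of `G` with both endpoints in `K`. -/
def cliqueEdges {V : Type*} [Fintype V] (G : SimpleGraph V) (K : Finset V) :
    Finset G.edgeSet :=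
  Finset.filter (fun e : G.edgeSet => ∀ v ∈ (e : Sym2 V), v ∈ K) Finset.univ

namespace Stmt11Aux

variable {V : Type*}

/-- star at `c` with leaves `L` plus an extra edge `uv` (none if `u = v`). -/
def cat (c : V) (L : Finset V) (u v : V) : SimpleGraph V where
  Adj x y := x ≠ y ∧ (x = c ∧ y ∈ L ∨ y = c ∧ x ∈ L ∨ x = u ∧ y = v ∨ x = v ∧ y = u)
  symm := ⟨fun x y h => by grind⟩
  loopless := ⟨fun x h => h.1 rfl⟩

theorem cat_adj (c : V) (L : Finset V) (u v x y : V) : (cat c L u v).Adj x y ↔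
    x ≠ y ∧ (x = c ∧ y ∈ L ∨ y = c ∧ x ∈ L ∨ x = u ∧ y = v ∨ x = v ∧ y = u) := Iff.rfl

theorem inter_iff {a b c d : ℝ} (h1 : a ≤ b) (h2 : c ≤ d) :
    (Set.Icc a b ∩ Set.Icc c d).Nonempty ↔ a ≤ d ∧ c ≤ b := by
  rw [Set.Icc_inter_Icc, Set.nonempty_Icc]
  simp only [sup_le_iff, le_inf_iff]
  tauto

theorem exists_pos [Fintype V] : ∃ (p : V → ℝ) (N : ℝ), Function.Injective p ∧
    ∀ v, 0 < p v ∧ p v < N := by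
  refine ⟨fun v => ((Fintype.equivFin V v : ℕ) : ℝ) + 1, Fintype.card V + 1, ?_, ?_⟩
  · intro x y h
    simp only [add_left_inj, Nat.cast_inj] at h
    exact (Fintype.equivFin V).injective (Fin.ext h)
  · intro v
    refine ⟨by positivity, ?_⟩
    have := (Fintype.equivFin V v).2
    have h2 : ((Fintype.equivFin V v : ℕ) : ℝ) < Fintype.card V := by exact_mod_cast this
    linarith

theorem interval_star [Fintype V] (c : V) (L : Finset V) (hc : c ∉ L) :
    IsIntervalGraph (cat c L c c) := by
  obtain ⟨p, N, hp, hN⟩ := exists_pos (V := V)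
  have h1 : ∀ v, (if v = c then 0 else if v ∈ L then p v else - p v) ≤
    (if v = c then N else if v ∈ L then p v else - p v) := by
    intro v
    have := hN v
    split_ifs <;> linarith
  refine ⟨_, _, h1, ?_⟩
  intro x y hxy
  rw [inter_iff (h1 x) (h1 y), cat_adj]
  have := hN x
  have := hN y
  have := hp.ne hxy
  grind

theorem interval_cat [Fintype V] (c : V) (L : Finset V) (hc : c ∉ L) (u v : V)
    (huv : u ≠ v) (hu : u ≠ c) (hv : v ≠ c) (hvL : v ∉ L) :
    IsIntervalGraph (cat c L u v) := by
  obtain ⟨p, N, hp, hN⟩ := exists_pos (V := V)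
  have h1 : ∀ x, (if x = c then 0 else if x = v then N + 1 else if x = u then
      (if x ∈ L then N else N + 1) else if x ∈ L then p x else - p x) ≤
    (if x = c then N else if x = v then N + 1 else if x = u then N + 1
      else if x ∈ L then p x else - p x) := by
    intro x
    have := hN x
    split_ifs <;> linarith
  refine ⟨_, _, h1, ?_⟩
  intro x y hxy
  rw [inter_iff (h1 x) (h1 y), cat_adj]
  have := hN x
  have := hN y
  have := hp.ne hxy
  by_cases x = c <;> by_cases y = c <;> by_cases x = v <;> by_cases y = v <;> grind

theorem cliqueFree_star (c : V) (L : Finset V) (hc : c ∉ L) :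
    (cat c L c c).CliqueFree 3 := by
  intro s hs
  rw [SimpleGraph.is3Clique_iff] at hs
  obtain ⟨x, y, z, h1, h2, h3, -⟩ := hs
  rw [cat_adj] at h1 h2 h3
  grind

theorem cliqueFree_cat (c : V) (L : Finset V) (hc : c ∉ L) (u v : V)
    (huv : u ≠ v) (hu : u ≠ c) (hv : v ≠ c) (hvL : v ∉ L) :
    (cat c L u v).CliqueFree 3 := by
  intro s hs
  rw [SimpleGraph.is3Clique_iff] at hs
  obtain ⟨x, y, z, h1, h2, h3, -⟩ := hs
  rw [cat_adj] at h1 h2 h3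
  grind

/-- indicator vector of an edge -/
def S (G : SimpleGraph V) (s : Sym2 V) : G.edgeSet → ℝ := fun e => if (e : Sym2 V) = s then 1 else 0

/-- incidence vector of a star -/
def T (G : SimpleGraph V) (c : V) (L : Finset V) : G.edgeSet → ℝ := ∑ x ∈ L, S G s(c, x)

theorem T_apply (G : SimpleGraph V) (c : V) (L : Finset V) (e : G.edgeSet) :
    T G c L e = if ∃ x ∈ L, (e : Sym2 V) = s(c, x) then 1 else 0 := by
  unfold T S
  rw [Finset.sum_apply]
  split_ifs with h
  · obtain ⟨x, hx, he⟩ := h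
    rw [Finset.sum_eq_single x]
    · simp [he]
    · intro y _ hyx
      rw [if_neg]
      rw [he, Sym2.congr_right]
      exact fun h => hyx h.symm
    · exact fun h => absurd hx h
  · apply Finset.sum_eq_zero
    intro x hx
    rw [if_neg]
    exact fun he => h ⟨x, hx, he⟩

theorem T_mem [Fintype V] (G : SimpleGraph V) (c : V) (L : Finset V) (hc : c ∉ L)
    (hL : ∀ x ∈ L, G.Adj c x) : T G c L ∈ PI G 2 := by
  apply subset_convexHull
  refine ⟨cat c L c c, ⟨?_, interval_star c L hc, cliqueFree_star c L hc⟩, ?_⟩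
  · intro x y h
    rw [cat_adj] at h
    have := hL x
    have := hL y
    have := G.adj_comm x y
    grind
  · rintro ⟨e, he⟩
    rw [T_apply]
    congr 1
    induction e with
    | _ x y =>
    simp only [SimpleGraph.mem_edgeSet, cat_adj, Sym2.eq_iff] at he ⊢
    have := he.ne
    apply propext
    grind

theorem TS_mem [Fintype V] (G : SimpleGraph V) (c : V) (L : Finset V) (hc : c ∉ L)
    (hL : ∀ x ∈ L, G.Adj c x) (u v : V)
    (huv : G.Adj u v) (hu : u ≠ c) (hv : v ≠ c) (hvL : v ∉ L) :
    T G c L + S G s(u, v) ∈ PI G 2 := by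
  apply subset_convexHull
  refine ⟨cat c L u v, ⟨?_, interval_cat c L hc u v huv.ne hu hv hvL,
    cliqueFree_cat c L hc u v huv.ne hu hv hvL⟩, ?_⟩
  · intro x y h
    rw [cat_adj] at h
    have := hL x
    have := hL y
    have := G.adj_comm x y
    grind
  · rintro ⟨e, he⟩
    rw [Pi.add_apply, T_apply]
    unfold S
    induction e with
    | _ x y =>
    simp only [SimpleGraph.mem_edgeSet, cat_adj, Sym2.eq_iff] at he ⊢
    have := he.ne
    have h1 : (∃ z ∈ L, x = c ∧ y = z ∨ x = z ∧ y = c) ↔ (x = c ∧ y ∈ L ∨ y = c ∧ x ∈ L) := by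
      grind
    have h4 : (x ≠ y ∧ (x = c ∧ y ∈ L ∨ y = c ∧ x ∈ L ∨ x = u ∧ y = v ∨ x = v ∧ y = u)) ↔
        ((x = c ∧ y ∈ L ∨ y = c ∧ x ∈ L) ∨ (x = u ∧ y = v ∨ x = v ∧ y = u)) := by
      simp only [or_assoc, ne_eq, this, not_false_eq_true, true_and]
    simp only [h1]
    by_cases h2 : (x = c ∧ y ∈ L ∨ y = c ∧ x ∈ L) <;>
    by_cases h3 : (x = u ∧ y = v ∨ x = v ∧ y = u)
    · exfalso
      clear h1 he hL
      rcases h2 with ⟨rfl, h2⟩ | ⟨rfl, h2⟩ <;> rcases h3 with ⟨rfl, rfl⟩ | ⟨rfl, rfl⟩ <;>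
        first | exact hu rfl | exact hv rfl | exact hvL h2
    · rw [if_pos h2, if_neg h3, if_pos (h4.2 (by first | exact Or.inl h2 | exact Or.inr h3))]; simp
    · rw [if_neg h2, if_pos h3, if_pos (h4.2 (by first | exact Or.inl h2 | exact Or.inr h3))]; simp
    · rw [if_neg h2, if_neg h3, if_neg (fun h => (h4.1 h).elim h2 h3)]; simp

theorem count [Fintype V] (G H : SimpleGraph V) (hI : IsIntervalGraph H) (hF : H.CliqueFree 3) :
    ∀ (n : ℕ) (K : Finset V), K.card = n + 1 →
      ((cliqueEdges G K).filter (fun e : G.edgeSet => (e : Sym2 V) ∈ H.edgeSet)).card ≤ n := by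
  obtain ⟨a, b, hab, hadj⟩ := hI
  have key : ∀ K : Finset V, ∀ v ∈ K, (∀ x ∈ K, a x ≤ a v) → ∀ x ∈ K, ∀ y ∈ K,
      H.Adj v x → H.Adj v y → x = y := by
    intro K v hv hmax x hx y hy hvx hvy
    by_contra hxy
    have h1 := (hadj v x hvx.ne).1 hvx
    have h2 := (hadj v y hvy.ne).1 hvy
    rw [inter_iff (hab _) (hab _)] at h1 h2
    have h3 : H.Adj x y := by
      rw [hadj x y hxy, inter_iff (hab _) (hab _)]
      exact ⟨(hmax x hx).trans h2.1, (hmax y hy).trans h1.1⟩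
    exact hF {v, x, y} (SimpleGraph.is3Clique_iff.2 ⟨v, x, y, hvx, hvy, h3, rfl⟩)
  intro n
  induction n with
  | zero =>
    intro K hK
    obtain ⟨v, rfl⟩ := Finset.card_eq_one.1 hK
    rw [Nat.le_zero, Finset.card_eq_zero, Finset.filter_eq_empty_iff]
    rintro ⟨e, he⟩ h1 _
    induction e with
    | _ x y =>
    simp [cliqueEdges] at h1
    have := G.ne_of_adj he
    grind
  | succ n ih =>
    intro K hK
    obtain ⟨v, hv, hmax⟩ := Finset.exists_max_image K a (Finset.card_pos.1 (by omega))
    have h1 := ih (K.erase v) (by rw [Finset.card_erase_of_mem hv]; omega)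
    set A := (cliqueEdges G K).filter (fun e : G.edgeSet => (e : Sym2 V) ∈ H.edgeSet)
    set B := (cliqueEdges G (K.erase v)).filter (fun e : G.edgeSet => (e : Sym2 V) ∈ H.edgeSet)
    have h2 : A ⊆ B ∪ A.filter (fun e : G.edgeSet => v ∈ (e : Sym2 V)) := by
      intro e he
      simp only [A, B, cliqueEdges, Finset.mem_union, Finset.mem_filter, Finset.mem_univ,
        true_and, Finset.mem_erase] at he ⊢
      by_cases hve : v ∈ (e : Sym2 V)
      · right; exact ⟨he, hve⟩
      · left; refine ⟨fun w hw => ⟨?_, he.1 w hw⟩, he.2⟩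
        rintro rfl; exact hve hw
    have h3 : (A.filter (fun e : G.edgeSet => v ∈ (e : Sym2 V))).card ≤ 1 := by
      rw [Finset.card_le_one]
      intro e he f hf
      simp only [A, cliqueEdges, Finset.mem_filter, Finset.mem_univ, true_and] at he hf
      obtain ⟨⟨he1, he2⟩, x, hx⟩ := he
      obtain ⟨⟨hf1, hf2⟩, y, hy⟩ := hf
      apply Subtype.ext
      rw [hx] at he1 he2 ⊢
      rw [hy] at hf1 hf2 ⊢
      rw [key K v hv hmax x (he1 x (by simp)) y (hf1 y (by simp)) he2 hf2]
    have h4 := Finset.card_le_card h2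
    have h5 := Finset.card_union_le B (A.filter (fun e : G.edgeSet => v ∈ (e : Sym2 V)))
    omega

/-- the functional -/
def phi [Fintype V] (G : SimpleGraph V) (K : Finset V) : (G.edgeSet → ℝ) →ₗ[ℝ] ℝ :=
  ∑ e ∈ cliqueEdges G K, LinearMap.proj e

theorem phi_apply [Fintype V] (G : SimpleGraph V) (K : Finset V) (z : G.edgeSet → ℝ) :
    phi G K z = ∑ e ∈ cliqueEdges G K, z e := by
  simp [phi]

theorem valid [Fintype V] (G : SimpleGraph V) (K : Finset V) (hK2 : 2 ≤ K.card) :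
    ∀ z ∈ PI G 2, phi G K z ≤ (K.card : ℝ) - 1 := by
  have : PI G 2 ⊆ {z | phi G K z ≤ (K.card : ℝ) - 1} := by
    apply convexHull_min
    · rintro z ⟨H, ⟨-, hI, hF⟩, hz⟩
      have h := count G H hI hF (K.card - 1) K (by omega)
      rw [Set.mem_ofPred_eq, phi_apply]
      simp only [hz]
      rw [Finset.sum_boole]
      have h' : (((cliqueEdges G K).filter (fun e : G.edgeSet => (e : Sym2 V) ∈ H.edgeSet)).card : ℝ) + 1
        ≤ K.card := by
        exact_mod_cast (by omega)
      linarith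
    · exact convex_halfSpace_le (phi G K).isLinear _
  exact this

theorem phi_S_in [Fintype V] (G : SimpleGraph V) (K : Finset V) (hK : G.IsClique ↑K) (a b : V)
    (ha : a ∈ K) (hb : b ∈ K) (hab : a ≠ b) : phi G K (S G s(a, b)) = 1 := by
  rw [phi_apply, Finset.sum_eq_single ⟨s(a, b), hK ha hb hab⟩]
  · simp [S]
  · intro e _ he
    unfold S
    rw [if_neg]
    exact fun h => he (Subtype.ext h)
  · intro h
    exfalso
    apply h
    simp [cliqueEdges, ha, hb]

theorem phi_S_out [Fintype V] (G : SimpleGraph V) (K : Finset V) (a b : V)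
    (hb : b ∉ K) : phi G K (S G s(a, b)) = 0 := by
  rw [phi_apply]
  apply Finset.sum_eq_zero
  intro e he
  unfold S
  rw [if_neg]
  intro h
  simp only [cliqueEdges, Finset.mem_filter, Finset.mem_univ, true_and] at he
  exact hb (he b (by simp [h]))

theorem phi_T [Fintype V] (G : SimpleGraph V) (K : Finset V) (hK : G.IsClique ↑K) (c : V)
    (hc : c ∈ K) : phi G K (T G c (K.erase c)) = (K.card : ℝ) - 1 := by
  unfold T
  rw [map_sum, Finset.sum_congr rfl (g := fun _ => (1 : ℝ))]
  · rw [Finset.sum_const, Finset.card_erase_of_mem hc, nsmul_eq_mul, mul_one,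
      Nat.cast_sub (Finset.card_pos.2 ⟨c, hc⟩)]
    simp
  · intro x hx
    rw [Finset.mem_erase] at hx
    exact phi_S_in G K hK c x hc hx.2 hx.1.symm

theorem T_insert (G : SimpleGraph V) (c v : V) (L : Finset V) (h : v ∉ L) :
    T G c (insert v L) = T G c L + S G s(c, v) := by
  unfold T
  rw [Finset.sum_insert h, add_comm]

theorem dir_full [Fintype V] (G : SimpleGraph V) : vectorSpan ℝ (PI G 2) = ⊤ := by
  rw [eq_top_iff]
  rintro z -
  have hz : z = ∑ e : G.edgeSet, z e • S G e := by
    ext f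
    simp [S, Finset.sum_apply, Subtype.ext_iff.symm]
  rw [hz]
  apply Submodule.sum_mem
  rintro ⟨e, he⟩ -
  apply Submodule.smul_mem
  induction e with
  | _ x y =>
  have hxy : G.Adj x y := he
  have h1 := T_mem G x ∅ (by simp) (by simp)
  have h2 := T_mem G x {y} (by simpa using hxy.ne) (by simpa using hxy)
  have h3 := vsub_mem_vectorSpan ℝ h2 h1
  simpa [T] using h3

theorem dir_face [Fintype V] (G : SimpleGraph V)
    (K : Finset V) (hK : G.IsClique ↑K) (hK2 : 2 ≤ K.card) :
    vectorSpan ℝ {z ∈ PI G 2 | phi G K z = (K.card : ℝ) - 1} = LinearMap.ker (phi G K) := by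
  set F := {z ∈ PI G 2 | phi G K z = (K.card : ℝ) - 1} with hF
  apply le_antisymm
  · unfold vectorSpan
    rw [Submodule.span_le]
    rintro _ ⟨x, hx, y, hy, rfl⟩
    simp only [vsub_eq_sub, SetLike.mem_coe, LinearMap.mem_ker, map_sub]
    rw [hx.2, hy.2, sub_self]
  have star : ∀ c ∈ K, T G c (K.erase c) ∈ F := by
    intro c hc
    refine ⟨T_mem G c _ (by simp) ?_, phi_T G K hK c hc⟩
    intro x hx
    rw [Finset.mem_erase] at hx
    exact hK hc hx.2 hx.1.symm
  have out : ∀ u v, G.Adj u v → v ∉ K → S G s(u, v) ∈ vectorSpan ℝ F := by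
    intro u v huv hv
    by_cases hu : u ∈ K
    · have h1 := star u hu
      have h2 : T G u (insert v (K.erase u)) ∈ F := by
        constructor
        · apply T_mem
          · simpa using huv.ne
          · intro x hx
            rw [Finset.mem_insert, Finset.mem_erase] at hx
            rcases hx with rfl | hx
            · exact huv
            · exact hK hu hx.2 hx.1.symm
        · rw [T_insert _ _ _ _ (by simp [hv]), map_add, phi_S_out G K u v hv, h1.2, add_zero]
      have h3 := vsub_mem_vectorSpan ℝ h2 h1
      rw [T_insert _ _ _ _ (by simp [hv])] at h3
      simpa using h3
    · obtain ⟨c, hc⟩ := Finset.card_pos.1 (by omega : 0 < K.card)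
      have h1 := star c hc
      have h2 : T G c (K.erase c) + S G s(u, v) ∈ F := by
        constructor
        · apply TS_mem _ _ _ (by simp) _ _ _ huv
          · rintro rfl; exact hu hc
          · rintro rfl; exact hv hc
          · simp [hv]
          · intro x hx
            rw [Finset.mem_erase] at hx
            exact hK hc hx.2 hx.1.symm
        · rw [map_add, phi_S_out G K u v hv, h1.2, add_zero]
      have h3 := vsub_mem_vectorSpan ℝ h2 h1
      simpa using h3
  have adj : ∀ a ∈ K, ∀ b ∈ K, ∀ c ∈ K, b ≠ a → c ≠ a →
      S G s(a, c) - S G s(a, b) ∈ vectorSpan ℝ F := by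
    intro a ha b hb c hc hba hca
    by_cases hbc : b = c
    · rw [hbc, sub_self]; exact Submodule.zero_mem _
    have h1 := star c hc
    have hE : T G c (K.erase c) = T G c ((K.erase c).erase a) + S G s(c, a) := by
      rw [← T_insert _ _ _ _ (by simp), Finset.insert_erase (by simp [ha, hca.symm])]
    have h2 : T G c ((K.erase c).erase a) + S G s(b, a) ∈ F := by
      constructor
      · apply TS_mem _ _ _ (by simp) _ _ _ (hK hb ha hba) hbc hca.symm (by simp)
        intro x hx
        simp only [Finset.mem_erase] at hx
        exact hK hc hx.2.2 hx.2.1.symm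
      · have h3 := h1.2
        rw [hE, map_add, phi_S_in G K hK c a hc ha hca] at h3
        rw [map_add, phi_S_in G K hK b a hb ha hba, h3]
    have h3 := vsub_mem_vectorSpan ℝ h1 h2
    rw [hE] at h3
    rw [Sym2.eq_swap, Sym2.eq_swap (a := a) (b := b)]
    simpa using h3
  obtain ⟨p, hp, q, hq, hpq⟩ := Finset.one_lt_card.1 (by omega : 1 < K.card)
  have diff : ∀ a ∈ K, ∀ b ∈ K, a ≠ b → S G s(a, b) - S G s(p, q) ∈ vectorSpan ℝ F := by
    intro a ha b hb hab
    by_cases haq : a = q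
    · subst haq
      have := adj a ha p hp b hb hpq hab.symm
      rwa [Sym2.eq_swap (a := p)]
    · have h1 := adj a ha q hq b hb (Ne.symm haq) hab.symm
      have h2 := adj q hq p hp a ha hpq haq
      have h3 := Submodule.add_mem _ h1 h2
      rw [Sym2.eq_swap (a := q) (b := a), Sym2.eq_swap (a := q) (b := p)] at h3
      simpa using h3
  intro z hz
  have hz1 : z = ∑ e : G.edgeSet, z e • S G e := by
    ext f
    simp [S, Finset.sum_apply, Subtype.ext_iff.symm]
  have hz2 : z = ∑ e : G.edgeSet, z e • (S G e - phi G K (S G e) • S G s(p, q)) := by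
    have h0 : ∑ e : G.edgeSet, z e * phi G K (S G e) = 0 := by
      rw [LinearMap.mem_ker, hz1, map_sum] at hz
      simpa using hz
    simp only [smul_sub, Finset.sum_sub_distrib, ← hz1, smul_smul, ← Finset.sum_smul, h0]
    simp
  rw [hz2]
  apply Submodule.sum_mem
  rintro ⟨e, he⟩ -
  apply Submodule.smul_mem
  induction e with
  | _ x y =>
  have hxy : G.Adj x y := he
  dsimp only
  by_cases hy : y ∈ K
  · by_cases hx : x ∈ K
    · rw [phi_S_in G K hK x y hx hy hxy.ne, one_smul]
      exact diff x hx y hy hxy.ne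
    · rw [Sym2.eq_swap, phi_S_out G K y x hx, zero_smul, sub_zero]
      exact out y x hxy.symm hx
  · rw [phi_S_out G K x y hy, zero_smul, sub_zero]
    exact out x y hxy hy

end Stmt11Aux

/-- **Proposition 4.2.1**: for `m = 2` and a clique `K` of `G`, the inequality
`Σ_{e ∈ E(K)} z_e ≤ |V(K)| - 1` is valid for `P_I(G,2)` and defines a facet of it. -/
theorem stmt_11 {V : Type*} [Fintype V] (G : SimpleGraph V)
    (K : Finset V) (hK : G.IsClique ↑K) (hK2 : 2 ≤ K.card) :
    (∀ z ∈ PI G 2, ∑ e ∈ cliqueEdges G K, z e ≤ (K.card : ℝ) - 1) ∧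
    Module.finrank ℝ
        (affineSpan ℝ
          {z ∈ PI G 2 | ∑ e ∈ cliqueEdges G K, z e = (K.card : ℝ) - 1}).direction + 1 =
      Module.finrank ℝ (affineSpan ℝ (PI G 2)).direction := by
  have hphi : ∀ z, ∑ e ∈ cliqueEdges G K, z e = Stmt11Aux.phi G K z :=
    fun z => (Stmt11Aux.phi_apply G K z).symm
  have hdf := Stmt11Aux.dir_face G K hK hK2
  simp only [← hphi] at hdf
  refine ⟨fun z hz => (hphi z).trans_le (Stmt11Aux.valid G K hK2 z hz), ?_⟩
  rw [direction_affineSpan, direction_affineSpan, Stmt11Aux.dir_full,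
    hdf, finrank_top]
  have h := LinearMap.finrank_range_add_finrank_ker (Stmt11Aux.phi G K)
  obtain ⟨p, hp, q, hq, hpq⟩ := Finset.one_lt_card.1 (by omega : 1 < K.card)
  have hs : LinearMap.range (Stmt11Aux.phi G K) = ⊤ := by
    rw [LinearMap.range_eq_top]
    apply LinearMap.surjective
    intro h0
    have := Stmt11Aux.phi_S_in G K hK p q hp hq hpq
    rw [h0] at this
    simp at this
  rw [hs, finrank_top, Module.finrank_self] at h
  omega

end
end

section
/- Let K be a clique of G with n = |V(K)|, and set α = ⌈n/m⌉, n_{α−1} = mα − n, n_α = n − m(α−1), and f(K, m) = n_{α−1}·(α−1)(α−2)/2 + n_α·α(α−1)/2. Then the inequality Σ_{e∈E(K)} z_e ≤ |E(K)| − f(K, m) is valid for P_I(G, m), i.e., every feasible edge set I satisfies |I ∩ E(K)| ≤ |E(K)| − f(K, m). -/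
open Finset
open scoped Classical

noncomputable section

lemma card_filter_eq {V : Type*} [Fintype V] (G H : SimpleGraph V) (hHG : H ≤ G)
    (K : Finset V) :
    ((cliqueEdges G K).filter (fun e : G.edgeSet => (e : Sym2 V) ∈ H.edgeSet)).card =
      (H.induce (K : Set V)).edgeFinset.card := by
  symm
  have key : ∀ e : Sym2 (K : Set V), e ∈ (H.induce (K : Set V)).edgeFinset →
      e.map Subtype.val ∈ H.edgeSet := by
    intro e
    induction e using Sym2.ind with
    | _ x y => simp
  refine Finset.card_bij
    (fun e he => ⟨e.map Subtype.val, SimpleGraph.edgeSet_mono hHG (key e he)⟩) ?_ ?_ ?_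
  · intro e he
    have h := key e he
    simp only [cliqueEdges, Finset.mem_filter, Finset.mem_univ, true_and]
    refine ⟨?_, h⟩
    intro v hv
    rw [Sym2.mem_map] at hv
    obtain ⟨w, -, rfl⟩ := hv
    exact w.2
  · intro a _ b _ hab
    exact Sym2.map.injective Subtype.val_injective (Subtype.ext_iff.mp hab)
  · rintro ⟨e, he⟩ hb
    induction e using Sym2.ind with
    | _ x y =>
      simp only [cliqueEdges, Finset.mem_filter, Finset.mem_univ, true_and] at hb
      obtain ⟨h1, h2⟩ := hb
      refine ⟨s(⟨x, h1 x (by simp)⟩, ⟨y, h1 y (by simp)⟩), ?_, ?_⟩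
      · simpa using h2
      · simp

lemma card_filter_lift {V : Type*} [Fintype V] (G H : SimpleGraph V) (K : Finset V) :
    ((cliqueEdges G K).filter (fun e => (e : Sym2 V) ∈ H.edgeSet)).card =
    ((cliqueEdges G K).filter (fun e : G.edgeSet => (e : Sym2 V) ∈ H.edgeSet)).card := by
  have h : (do let a ← cliqueEdges G K; pure (a : Sym2 V) : Finset (Sym2 V)) =
      (cliqueEdges G K).image Subtype.val := by
    ext e
    simp [eq_comm]
  rw [h, Finset.filter_image, Finset.card_image_of_injective _ Subtype.val_injective]

lemma arith_bound (n m : ℕ) (hm : 2 ≤ m) :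
    (n ^ 2 - (n % m) ^ 2) * (m - 1) / (2 * m) + (n % m).choose 2 ≤
      n.choose 2 -
          ((m * ((n + m - 1) / m) - n) *
              ((((n + m - 1) / m) - 1) * (((n + m - 1) / m) - 2) / 2) +
            (n - m * (((n + m - 1) / m) - 1)) *
              ((((n + m - 1) / m)) * (((n + m - 1) / m) - 1) / 2)) := by
  obtain ⟨q, s, hs, hn, hmod⟩ : ∃ q s, s < m ∧ n = m * q + s ∧ n % m = s :=
    ⟨n / m, n % m, Nat.mod_lt _ (by omega), (Nat.div_add_mod n m).symm, rfl⟩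
  have hf : ((m * ((n + m - 1) / m) - n) *
              ((((n + m - 1) / m) - 1) * (((n + m - 1) / m) - 2) / 2) +
            (n - m * (((n + m - 1) / m) - 1)) *
              ((((n + m - 1) / m)) * (((n + m - 1) / m) - 1) / 2)) =
        m * q.choose 2 + s * q := by
    rcases Nat.eq_zero_or_pos s with h0 | h0
    · have hα : (n + m - 1) / m = q := by
        rw [Nat.div_eq_iff (by omega)]
        have : q * m = m * q := mul_comm _ _
        constructor <;> omega
      rw [hα, hn, h0, Nat.choose_two_right]
      rcases q with _ | q
      · simp
      · have : m * (q + 1) + 0 - m * (q + 1 - 1) = m := by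
          simp [mul_add]
        rw [this]
        simp
    · have hα : (n + m - 1) / m = q + 1 := by
        rw [Nat.div_eq_iff (by omega)]
        have : (q + 1) * m = m * q + m := by ring
        constructor <;> omega
      have h1 : m * (q + 1) - n = m - s := by rw [hn, mul_add]; omega
      have h2 : n - m * (q + 1 - 1) = s := by rw [hn]; simp
      have h3 : (q + 1) * (q + 1 - 1) / 2 = q.choose 2 + q := by
        rw [← Nat.choose_two_right, Nat.choose_succ_succ' q 1]; simp [add_comm]
      have h4 : (q + 1 - 1) * (q + 1 - 2) / 2 = q.choose 2 := by
        rw [Nat.choose_two_right]; rfl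
      rw [hα, h1, h2, h3, h4]
      obtain ⟨t, rfl⟩ := Nat.exists_eq_add_of_lt hs
      have : s + t + 1 - s = t + 1 := by omega
      rw [this]; ring
  rw [hf, hmod]
  have hsq : n ^ 2 - s ^ 2 = m * (q * (m * q + 2 * s)) := by
    rw [hn]
    apply Nat.sub_eq_of_eq_add
    ring
  have hcast : ∀ k : ℕ, (k.choose 2 : ℚ) = k * (k - 1) / 2 := Nat.cast_choose_two ℚ
  have hdiv : (n ^ 2 - s ^ 2) * (m - 1) / (2 * m) = q ^ 2 * m.choose 2 + q * s * (m - 1) := by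
    apply Nat.div_eq_of_eq_mul_right (by omega)
    rw [hsq]
    have : ((m - 1 : ℕ) : ℚ) = m - 1 := by rw [Nat.cast_sub (by omega)]; simp
    have h : ((m * (q * (m * q + 2 * s)) * (m - 1) : ℕ) : ℚ) =
      ((2 * m * (q ^ 2 * m.choose 2 + q * s * (m - 1)) : ℕ) : ℚ) := by
      push_cast
      rw [this, hcast]; ring
    exact_mod_cast h
  rw [hdiv]
  apply Nat.le_sub_of_add_le
  apply le_of_eq
  have : ((m - 1 : ℕ) : ℚ) = m - 1 := by rw [Nat.cast_sub (by omega)]; simp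
  have h : ((q ^ 2 * m.choose 2 + q * s * (m - 1) + s.choose 2 + (m * q.choose 2 + s * q) : ℕ) : ℚ)
      = ((n.choose 2 : ℕ) : ℚ) := by
    rw [hn]
    push_cast
    simp only [hcast, this]
    push_cast
    ring
  exact_mod_cast h

/-- **Proposition 4.2.4**: for a clique `K` of `G` with `n = |V(K)|`, `α = ⌈n/m⌉`,
`n_{α-1} = mα - n`, `n_α = n - m(α-1)` and
`f(K,m) = n_{α-1}·(α-1)(α-2)/2 + n_α·α(α-1)/2`, the inequality
`Σ_{e ∈ E(K)} z_e ≤ |E(K)| - f(K,m)` is valid for `P_I(G,m)`: every feasible edge set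
`I` satisfies `|I ∩ E(K)| ≤ |E(K)| - f(K,m)`. -/
theorem stmt_12 {V : Type*} [Fintype V] (G : SimpleGraph V) (m : ℕ) (hm : 2 ≤ m)
    (K : Finset V) (hK : G.IsClique ↑K) :
    ∀ H : SimpleGraph V, FeasibleEdges G H m →
      ((cliqueEdges G K).filter (fun e => (e : Sym2 V) ∈ H.edgeSet)).card ≤
        (cliqueEdges G K).card -
          ((m * ((K.card + m - 1) / m) - K.card) *
              ((((K.card + m - 1) / m) - 1) * (((K.card + m - 1) / m) - 2) / 2) +
            (K.card - m * (((K.card + m - 1) / m) - 1)) *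
              ((((K.card + m - 1) / m)) * (((K.card + m - 1) / m) - 1) / 2)) := by
  rintro H ⟨hHG, -, hcf⟩
  have hc : (cliqueEdges G K).card = K.card.choose 2 := by
    have h := card_filter_eq G G le_rfl K
    rw [Finset.filter_true_of_mem (fun e _ => e.2)] at h
    have htop : G.induce (K : Set V) = ⊤ := by
      ext x y
      simp only [SimpleGraph.comap_adj, SimpleGraph.top_adj]
      exact ⟨fun h e => h.ne (congrArg _ e),
        fun h => hK x.2 y.2 (fun e => h (Subtype.ext e))⟩
    rw [h]
    have h2 := SimpleGraph.card_edgeFinset_top_eq_card_choose_two (V := (K : Set V))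
    simp only [Finset.coe_sort_coe, Fintype.card_coe] at h2
    rw [← h2]
    congr 1
    ext e
    simp only [SimpleGraph.mem_edgeFinset, htop]
    exact Iff.rfl
  rw [hc, card_filter_lift, card_filter_eq G H hHG K]
  have hT := SimpleGraph.CliqueFree.card_edgeFinset_le
    (hcf.comap ⟨(SimpleGraph.Embedding.induce (G := H) (K : Set V)).toCopy⟩)
  refine le_trans ?_ (arith_bound K.card m hm)
  simp only [Finset.coe_sort_coe, Fintype.card_coe] at hT
  convert hT using 2

end
end

section
/- Let v ∈ V. If ω_G(v) ≤ ℓ_opt(G, k), then v cannot belong to any minimal optimal interdiction policy, i.e., there is no W ⊆ V with |W| ≤ k, ω(G − W) = ℓ_opt(G, k), W minimal, and v ∈ W. -/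
open Finset
open scoped Classical

noncomputable section

/-- The clique number `ω(G)` of a graph: the maximum size of a set of pairwise adjacent
vertices. -/
def omega {W : Type*} (G : SimpleGraph W) : ℕ :=
  sSup {n | ∃ s : Finset W, G.IsNClique n s}

/-- `ω(G - W)`: the clique number of the subgraph of `G` induced on the complement of
`W`. -/
def omegaDel {W : Type*} (G : SimpleGraph W) (D : Finset W) : ℕ :=
  omega (G.induce ((↑D : Set W)ᶜ))

/-- `ℓ_opt(G,k)`: the optimal value of the maximum clique interdiction problem,
`min { ω(G - W) : W ⊆ V, |W| ≤ k }`. -/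
def lopt {W : Type*} (G : SimpleGraph W) (k : ℕ) : ℕ :=
  sInf {q | ∃ D : Finset W, D.card ≤ k ∧ q = omegaDel G D}

/-- `ω_G(v)`: the maximum size of a clique of `G` containing the vertex `v`. -/
def omegaAt {W : Type*} (G : SimpleGraph W) (v : W) : ℕ :=
  sSup {n | ∃ s : Finset W, G.IsNClique n s ∧ v ∈ s}

theorem omegaDel_le_iff {V : Type*} [Fintype V] (G : SimpleGraph V) (D : Finset V) (n : ℕ) :
    omegaDel G D ≤ n ↔
      ∀ s : Finset V, G.IsClique (s : Set V) → (∀ x ∈ s, x ∉ D) → s.card ≤ n := by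
  unfold omegaDel
  change (G.induce ((↑D : Set V)ᶜ)).cliqueNum ≤ n ↔ _
  constructor
  · intro h s hs hd
    let t : Finset (((↑D : Set V)ᶜ : Set V)) := s.subtype (fun x => x ∈ ((↑D : Set V)ᶜ : Set V))
    have ht : (G.induce ((↑D : Set V)ᶜ)).IsClique (t : Set _) := by
      intro a ha b hb hab
      have ha' : a.1 ∈ s := by simpa [t] using ha
      have hb' : b.1 ∈ s := by simpa [t] using hb
      exact hs ha' hb' (fun h => hab (Subtype.ext h))
    have hc : t.card = s.card := by
      simp only [t, Finset.card_subtype]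
      congr 1
      exact Finset.filter_true_of_mem (fun x hx => by simpa using hd x hx)
    rw [← hc]
    exact le_trans (SimpleGraph.IsClique.card_le_cliqueNum (tc := ht)) h
  · intro h
    obtain ⟨t, ht⟩ := (G.induce ((↑D : Set V)ᶜ)).exists_isNClique_cliqueNum
    rw [← ht.card_eq, ← Finset.card_map (Function.Embedding.subtype _)]
    apply h
    · intro a ha b hb hab
      simp only [Finset.coe_map, Set.mem_image] at ha hb
      obtain ⟨a, ha, rfl⟩ := ha
      obtain ⟨b, hb, rfl⟩ := hb
      exact ht.isClique ha hb (fun h => hab (by rw [h]))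
    · intro x hx
      obtain ⟨a, _, rfl⟩ := Finset.mem_map.1 hx
      exact fun h => a.2 (Finset.mem_coe.2 h)

/-- **Proposition 5.2.3**: if `ω_G(v) ≤ ℓ_opt(G,k)`, then `v` cannot belong to any
minimal optimal interdiction policy. -/
theorem stmt_15 {V : Type*} [Fintype V] (G : SimpleGraph V) (k : ℕ) (hk : 0 < k)
    (v : V) (hv : omegaAt G v ≤ lopt G k) :
    ¬ ∃ W : Finset V, W.card ≤ k ∧ omegaDel G W = lopt G k ∧
      (∀ u ∈ W, omegaDel G W < omegaDel G (W.erase u)) ∧ v ∈ W := by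
  rintro ⟨W, _, hopt, hmin, hvW⟩
  refine absurd (hmin v hvW) (not_lt.2 ?_)
  rw [omegaDel_le_iff]
  intro s hs hd
  by_cases hvs : v ∈ s
  · rw [hopt]
    refine le_trans ?_ hv
    unfold omegaAt
    refine le_csSup ?_ ⟨s, ⟨hs, rfl⟩, hvs⟩
    refine ⟨Fintype.card V, ?_⟩
    rintro n ⟨t, ht, _⟩
    rw [← ht.card_eq]
    exact Finset.card_le_univ t
  · refine (omegaDel_le_iff G W _).1 le_rfl s hs (fun x hx hxW => hd x hx ?_)
    exact Finset.mem_erase.2 ⟨fun h => hvs (h ▸ hx), hxW⟩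

end
end

section
/- If k ≥ 1, the polytope P(G, k) is full-dimensional, i.e., its affine span is all of ℝ^V × ℝ (dimension |V| + 1). -/
open Finset
open scoped Classical

noncomputable section

/-- The integer points of the clique interdiction polytope `P(G,k) ⊆ ℝ^V × ℝ`:
pairs `(w, θ)` with `w ∈ {0,1}^V`, `θ ≥ 0`, `θ + Σ_{u∈K} w_u ≥ |K|` for every clique
`K` of `G`, and `Σ_{u∈V} w_u ≤ k`. -/
def cipSet {V : Type*} [Fintype V] (G : SimpleGraph V) (k : ℕ) : Set ((V → ℝ) × ℝ) :=
  {p | (∀ v, p.1 v = 0 ∨ p.1 v = 1) ∧ 0 ≤ p.2 ∧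
    (∀ K : Finset V, G.IsClique ↑K → (K.card : ℝ) ≤ p.2 + ∑ u ∈ K, p.1 u) ∧
    (∑ v, p.1 v) ≤ (k : ℝ)}

/-- The clique interdiction polytope `P(G,k)`. -/
def cipPoly {V : Type*} [Fintype V] (G : SimpleGraph V) (k : ℕ) : Set ((V → ℝ) × ℝ) :=
  convexHull ℝ (cipSet G k)

/-- **Proposition 5.4.1**: for `k ≥ 1`, the polytope `P(G,k)` is full-dimensional:
its affine span is all of `ℝ^V × ℝ`. -/
theorem stmt_17 {V : Type*} [Fintype V] (G : SimpleGraph V) (k : ℕ) (hk : 1 ≤ k) :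
    affineSpan ℝ (cipPoly G k) = ⊤ := by
  rw [cipPoly, affineSpan_convexHull]
  have hmem : ∀ w : V → ℝ, (∀ v, w v = 0 ∨ w v = 1) → (∑ v, w v) ≤ (k : ℝ) →
      ∀ t : ℝ, (Fintype.card V : ℝ) ≤ t → ((w, t) : (V → ℝ) × ℝ) ∈ cipSet G k := by
    intro w hw hs t ht
    refine ⟨hw, le_trans (Nat.cast_nonneg _) ht, ?_, hs⟩
    intro K _
    have h1 : (K.card : ℝ) ≤ (Fintype.card V : ℝ) := by
      exact_mod_cast Finset.card_le_univ K
    have h2 : 0 ≤ ∑ u ∈ K, w u := by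
      apply Finset.sum_nonneg
      intro u _
      rcases hw u with h | h <;> rw [h] <;> norm_num
    show (K.card : ℝ) ≤ t + ∑ u ∈ K, w u
    linarith
  have hk' : (1 : ℝ) ≤ (k : ℝ) := by exact_mod_cast hk
  have h0 : ∀ t : ℝ, (Fintype.card V : ℝ) ≤ t →
      (((0 : V → ℝ), t) : (V → ℝ) × ℝ) ∈ cipSet G k :=
    hmem 0 (fun v => Or.inl rfl) (by simp)
  have hv : ∀ v : V, ((Pi.single v (1 : ℝ), (Fintype.card V : ℝ)) : (V → ℝ) × ℝ) ∈
      cipSet G k := by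
    intro v
    refine hmem _ ?_ ?_ _ le_rfl
    · intro u
      by_cases h : u = v
      · subst h; right; simp
      · left; simp [h]
    · simpa using hk'
  have hp := h0 _ le_rfl
  rw [← AffineSubspace.direction_eq_top_iff_of_nonempty
    ⟨_, subset_affineSpan ℝ _ hp⟩, direction_affineSpan]
  have hA : (((0 : V → ℝ), (1 : ℝ)) : (V → ℝ) × ℝ) ∈ vectorSpan ℝ (cipSet G k) := by
    have := vsub_mem_vectorSpan ℝ (h0 ((Fintype.card V : ℝ) + 1) (by linarith)) hp
    simpa using this
  have hB : ∀ v : V, ((Pi.single v (1 : ℝ), (0 : ℝ)) : (V → ℝ) × ℝ) ∈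
      vectorSpan ℝ (cipSet G k) := by
    intro v
    have := vsub_mem_vectorSpan ℝ (hv v) hp
    simpa using this
  rw [eq_top_iff]
  rintro ⟨w, t⟩ -
  have key : ((w, t) : (V → ℝ) × ℝ) =
      t • ((0 : V → ℝ), (1 : ℝ)) + ∑ v, w v • ((Pi.single v (1 : ℝ) : V → ℝ), (0 : ℝ)) := by
    ext u
    · simp [Prod.fst_sum, Finset.sum_apply, Pi.single_apply]
    · simp [Prod.snd_sum]
  rw [key]
  exact Submodule.add_mem _ (Submodule.smul_mem _ _ hA)
    (Submodule.sum_mem _ fun v _ => Submodule.smul_mem _ _ (hB v))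

end
end

section
/- Assume k ≥ 1 and |V| ≥ 2, and let u ∈ V. Then: (1) the trivial inequality w_u ≤ 1 defines a facet of P(G, k) if and only if k ≥ 2; (2) the trivial inequality w_u ≥ 0 defines a facet of P(G, k). -/
open Finset
open scoped Classical

noncomputable section

lemma cip_mem {V : Type*} [Fintype V] (G : SimpleGraph V) (k : ℕ) (w : V → ℝ) (t : ℝ)
    (hw : ∀ v, w v = 0 ∨ w v = 1) (hs : ∑ v, w v ≤ (k : ℝ)) (ht : (Fintype.card V : ℝ) ≤ t) :
    (w, t) ∈ cipPoly G k := by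
  apply subset_convexHull
  refine ⟨hw, le_trans (Nat.cast_nonneg _) ht, ?_, hs⟩
  intro K _
  have h1 : (K.card : ℝ) ≤ Fintype.card V := by exact_mod_cast Finset.card_le_univ K
  have h2 : 0 ≤ ∑ u ∈ K, w u := Finset.sum_nonneg (fun v _ => by
    rcases hw v with h | h <;> rw [h] <;> norm_num)
  show (K.card : ℝ) ≤ t + ∑ u ∈ K, w u
  linarith

lemma cip_bound {V : Type*} [Fintype V] (G : SimpleGraph V) (k : ℕ) :
    ∀ p ∈ cipPoly G k, (∀ v, 0 ≤ p.1 v) ∧ (∀ v, p.1 v ≤ 1) ∧ ∑ v, p.1 v ≤ (k : ℝ) := by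
  have hc : Convex ℝ {p : (V → ℝ) × ℝ |
      (∀ v, 0 ≤ p.1 v) ∧ (∀ v, p.1 v ≤ 1) ∧ ∑ v, p.1 v ≤ (k : ℝ)} := by
    rintro x ⟨hx1, hx2, hx3⟩ y ⟨hy1, hy2, hy3⟩ a b ha hb hab
    refine ⟨fun v => ?_, fun v => ?_, ?_⟩
    · have := mul_nonneg ha (hx1 v)
      have := mul_nonneg hb (hy1 v)
      simp; linarith
    · have := mul_le_mul_of_nonneg_left (hx2 v) ha
      have := mul_le_mul_of_nonneg_left (hy2 v) hb
      simp; linarith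
    · have := mul_le_mul_of_nonneg_left hx3 ha
      have := mul_le_mul_of_nonneg_left hy3 hb
      have e : (k : ℝ) = a * k + b * k := by rw [← add_mul, hab, one_mul]
      simp [Finset.sum_add_distrib, ← Finset.mul_sum]; linarith
  have hsub : cipSet G k ⊆ {p : (V → ℝ) × ℝ |
      (∀ v, 0 ≤ p.1 v) ∧ (∀ v, p.1 v ≤ 1) ∧ ∑ v, p.1 v ≤ (k : ℝ)} := by
    rintro p ⟨h1, _, _, h4⟩
    refine ⟨fun v => ?_, fun v => ?_, h4⟩ <;> rcases h1 v with h | h <;> rw [h] <;> norm_num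
  exact fun p hp => convexHull_min hsub hc hp

/-- A submodule containing enough unit vectors contains everything supported on `T`. -/
lemma cip_span {V : Type*} [Fintype V] (W : Submodule ℝ ((V → ℝ) × ℝ)) (T : Set V)
    (h0 : ((0 : V → ℝ), (1 : ℝ)) ∈ W) (h1 : ∀ v ∈ T, ((Pi.single v 1 : V → ℝ), (0 : ℝ)) ∈ W)
    (x : (V → ℝ) × ℝ) (hx : ∀ v, v ∉ T → x.1 v = 0) : x ∈ W := by
  have e : x = (∑ v, x.1 v • ((Pi.single v 1 : V → ℝ), (0 : ℝ))) + x.2 • ((0 : V → ℝ), (1 : ℝ)) := by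
    ext v
    · simp [Prod.fst_sum, Finset.sum_apply, Pi.single_apply]
    · simp [Prod.snd_sum]
  rw [e]
  refine W.add_mem (W.sum_mem fun v _ => ?_) (W.smul_mem _ h0)
  by_cases hv : v ∈ T
  · exact W.smul_mem _ (h1 v hv)
  · rw [hx v hv, zero_smul]; exact W.zero_mem

/-- A subset of the polytope with a base point `w0` and its neighbours in directions `T`. -/
lemma cip_vspan {V : Type*} [Fintype V] (S : Set ((V → ℝ) × ℝ)) (T : Set V) (w0 : V → ℝ) (t : ℝ)
    (h0 : (w0, t) ∈ S) (h1 : (w0, t + 1) ∈ S)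
    (h2 : ∀ v ∈ T, (w0 + Pi.single v 1, t) ∈ S)
    (x : (V → ℝ) × ℝ) (hx : ∀ v, v ∉ T → x.1 v = 0) : x ∈ vectorSpan ℝ S := by
  apply cip_span _ T _ _ x hx
  · have := vsub_mem_vectorSpan ℝ h1 h0
    simpa using this
  · intro v hv
    have := vsub_mem_vectorSpan ℝ (h2 v hv) h0
    simpa using this

lemma cip_full {V : Type*} [Fintype V] (G : SimpleGraph V) (k : ℕ) (hk : 1 ≤ k) :
    vectorSpan ℝ (cipPoly G k) = ⊤ := by
  have hk' : (1 : ℝ) ≤ k := by exact_mod_cast hk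
  rw [eq_top_iff]
  intro x _
  refine cip_vspan _ Set.univ 0 (Fintype.card V) ?_ ?_ ?_ x (by simp)
  · exact cip_mem G k _ _ (by simp) (by simp) le_rfl
  · exact cip_mem G k _ _ (by simp) (by simp) (by linarith)
  · intro v _
    refine cip_mem G k _ _ (fun y => ?_) (by simpa using hk') le_rfl
    by_cases h : y = v <;> simp [h]

/-- The linear functional `(w, θ) ↦ w_u`. -/
def cipProj {V : Type*} (u : V) : ((V → ℝ) × ℝ) →ₗ[ℝ] ℝ :=
  (LinearMap.proj u).comp (LinearMap.fst ℝ (V → ℝ) ℝ)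

lemma cip_ker {V : Type*} [Fintype V] (u : V) :
    Module.finrank ℝ (LinearMap.ker (cipProj u)) + 1 = Module.finrank ℝ ((V → ℝ) × ℝ) := by
  have h := LinearMap.finrank_range_add_finrank_ker (cipProj u)
  have hs : LinearMap.range (cipProj u) = ⊤ := by
    rw [LinearMap.range_eq_top]
    intro c
    exact ⟨(fun _ => c, 0), rfl⟩
  rw [hs, finrank_top, Module.finrank_self] at h
  omega

lemma cip_face {V : Type*} [Fintype V] (P : Set ((V → ℝ) × ℝ)) (u : V) (c : ℝ)
    (w0 : V → ℝ) (t : ℝ) (hc : w0 u = c)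
    (h0 : (w0, t) ∈ P) (h1 : (w0, t + 1) ∈ P)
    (h2 : ∀ v, v ≠ u → (w0 + Pi.single v 1, t) ∈ P) :
    Module.finrank ℝ (vectorSpan ℝ {p ∈ P | p.1 u = c}) + 1 =
      Module.finrank ℝ ((V → ℝ) × ℝ) := by
  rw [← cip_ker u]
  have : vectorSpan ℝ {p ∈ P | p.1 u = c} = LinearMap.ker (cipProj u) := by
    apply le_antisymm
    · rw [vectorSpan, Submodule.span_le]
      rintro _ ⟨x, hx, y, hy, rfl⟩
      show (x - y).1 u = 0
      simp [hx.2, hy.2]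
    · intro x hx
      have hx' : x.1 u = 0 := hx
      refine cip_vspan {p ∈ P | p.1 u = c} {v | v ≠ u} w0 t ⟨h0, hc⟩ ⟨h1, hc⟩ ?_ x ?_
      · intro v hv
        refine ⟨h2 v hv, ?_⟩
        have : u ≠ v := fun h => hv h.symm
        simp [hc, this]
      · intro v hv
        have : v = u := by simpa using hv
        rw [this, hx']
  rw [this]

/-- **Proposition 5.4.2**: assume `k ≥ 1` and `|V| ≥ 2`, and let `u ∈ V`. Then
(1) the trivial inequality `w_u ≤ 1` defines a facet of `P(G,k)` iff `k ≥ 2`;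
(2) the trivial inequality `w_u ≥ 0` defines a facet of `P(G,k)`. -/
theorem stmt_18 {V : Type*} [Fintype V] (G : SimpleGraph V) (k : ℕ) (hk : 1 ≤ k)
    (hV : 2 ≤ Fintype.card V) (u : V) :
    (((∀ p ∈ cipPoly G k, p.1 u ≤ 1) ∧
        Module.finrank ℝ
            (affineSpan ℝ {p ∈ cipPoly G k | p.1 u = 1}).direction + 1 =
          Module.finrank ℝ (affineSpan ℝ (cipPoly G k)).direction) ↔ 2 ≤ k) ∧
    ((∀ p ∈ cipPoly G k, 0 ≤ p.1 u) ∧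
      Module.finrank ℝ
          (affineSpan ℝ {p ∈ cipPoly G k | p.1 u = 0}).direction + 1 =
        Module.finrank ℝ (affineSpan ℝ (cipPoly G k)).direction) := by
  have hk' : (1 : ℝ) ≤ k := by exact_mod_cast hk
  rw [direction_affineSpan, direction_affineSpan, direction_affineSpan, cip_full G k hk,
    finrank_top]
  refine ⟨⟨?_, ?_⟩, ?_, ?_⟩
  · rintro ⟨-, h⟩
    by_contra hlt
    have hk1 : k = 1 := by omega
    subst hk1
    have hle : vectorSpan ℝ {p ∈ cipPoly G 1 | p.1 u = 1} ≤
        LinearMap.range (LinearMap.inr ℝ (V → ℝ) ℝ) := by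
      have key : ∀ p ∈ {p ∈ cipPoly G 1 | p.1 u = 1}, p.1 = Pi.single u 1 := by
        rintro p ⟨hp, hpu⟩
        obtain ⟨b1, -, b3⟩ := cip_bound G 1 p hp
        funext v
        by_cases hv : v = u
        · subst hv; simpa using hpu
        · have h2 : p.1 v + p.1 u ≤ ∑ v, p.1 v := by
            rw [← Finset.sum_pair hv]
            exact Finset.sum_le_sum_of_subset_of_nonneg (Finset.subset_univ _)
              (fun i _ _ => b1 i)
          have h3 := b1 v
          push_cast at b3
          simp [hv]
          linarith
      rw [vectorSpan, Submodule.span_le]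
      rintro _ ⟨x, hx, y, hy, rfl⟩
      refine ⟨x.2 - y.2, ?_⟩
      ext v
      · simp [key x hx, key y hy]
      · simp
    have h1 := Submodule.finrank_mono hle
    have h2 := LinearMap.finrank_range_le (LinearMap.inr ℝ (V → ℝ) ℝ)
    rw [Module.finrank_self] at h2
    rw [Module.finrank_prod, Module.finrank_fintype_fun_eq_card, Module.finrank_self] at h
    omega
  · intro h2
    have h2' : (2 : ℝ) ≤ k := by exact_mod_cast h2
    refine ⟨fun p hp => (cip_bound G k p hp).2.1 u, ?_⟩
    have hs : ∀ y, (Pi.single u 1 : V → ℝ) y = 0 ∨ (Pi.single u 1 : V → ℝ) y = 1 := by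
      intro y; by_cases h : y = u <;> simp [h]
    refine cip_face _ u 1 (Pi.single u 1) (Fintype.card V) (by simp) ?_ ?_ ?_
    · exact cip_mem G k _ _ hs (by simpa using hk') le_rfl
    · exact cip_mem G k _ _ hs (by simpa using hk') (by linarith)
    · intro v hv
      refine cip_mem G k _ _ (fun y => ?_) ?_ le_rfl
      · by_cases h : y = v
        · subst h; simp [hv]
        · simpa [h] using hs y
      · simp [Finset.sum_add_distrib]; linarith
  · exact fun p hp => (cip_bound G k p hp).1 u
  · refine cip_face _ u 0 0 (Fintype.card V) (by simp) ?_ ?_ ?_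
    · exact cip_mem G k _ _ (by simp) (by simp) le_rfl
    · exact cip_mem G k _ _ (by simp) (by simp) (by linarith)
    · intro v _
      refine cip_mem G k _ _ (fun y => ?_) (by simpa using hk') le_rfl
      by_cases h : y = v <;> simp [h]

end
end
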